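/- arXiv:2503.21923 — 3 statements merged into one kernel-verified Lean document; each statement's English description precedes it below -/
import Mathlib

section
/- For any ε > 0 there is δ > 0 such that the following holds for all sufficiently large L. Let A, B be finite subsets of an additive (abelian) group and G ⊂ A × B such that |A| ≤ L|B|, |G| ≥ L^{−δ}|A|·|B|, and |{a + b : (a,b) ∈ G}| ≤ L^{δ}|A|. Then there exist A' ⊂ A and B' ⊂ B with |A'| ≥ L^{−ε}|A|, |B'| ≥ L^{−ε}|B|, and |A' + B'| ≤ L^{ε}|A'|. -/
/-!
Write `φ(d) = |A ∩ (A - d)| / |A|` (`pop`). Starting from the uniform weight `f₀` on `B`, let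
`f_{j+1} = (f_j ∘ f_j) φ²`, where `f ∘ f` is the autocorrelation of `f` (`corr`). These weights have
mass at most `1`.

* The hypotheses on the graph and Cauchy–Schwarz give `∑ (f₀ ∘ f₀) φ ≥ L^(-3δ)` (`cor_unif`), and
  each step raises this lower bound at most to the sixth power (`cor_step`), so that it remains
  `L^(-o(1))` over boundedly many steps as `δ → 0`.
* The square sums `N_j = ∑ f_j²` start at `1 / |B| ≤ L / |A|` and by the previous point never drop
  much below `1 / |A|` (`cor_le`). Hence `N_{j+2} ≥ 2κ N_j` for some bounded `j`, where `2κ` is a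
  fixed small negative power of `L`.
* For this `j`, the weight `f = f_{j+1}` is bounded by `N_j` while `f ∘ f` has square sum at least
  `2κ N_j`, the largest possible up to the factor `2κ`. A weighted form of Gowers' lemma on paths of
  length three (`exists_paths`) provides sets `X`, `Y` of large `f`-mass with `Y - X` small
  (`exists_small_diff`).
* As `f` is dominated by iterated correlations of the uniform measure on `B`, some translate of `Y`
  contains a large part `B'` of `B` (`Good.transfer`). The factor `φ²` makes the mass of `f` on
  `{φ < κ}` negligible, so most of `X` consists of popular differences of `A`; the `a ∈ A` with
  `a + d ∈ A` for many of these `d` form `A'`, and each element of `A' + Y` has many representations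
  in `A + (Y - X)` (`finish`).
-/

open Finset
open scoped Pointwise

/-! ### Paths of length three -/

/-- A weighted form of Gowers' lemma on paths of length three: a dense weighted bipartite graph `e`
has large vertex sets `X`, `Y` such that any `x ∈ X` and `y ∈ Y` are joined by many paths
`x, y₁, x₁, y`. An averaging argument gives a vertex `y₀` such that most pairs of its neighbours of
high degree have many common neighbours; `X` is the set of vertices having many common neighbours
with most of these neighbours of `y₀`, and `Y` the set of vertices adjacent to many of them. -/
lemma exists_paths {α : Type*} (V : Finset α) (w : α → ℝ) (e : α → α → ℝ) (κ : ℝ)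
    (hκ : 0 < κ) (hw : ∀ x, 0 ≤ w x) (hw1 : ∑ x ∈ V, w x ≤ 1)
    (he0 : ∀ x y, 0 ≤ e x y) (he1 : ∀ x y, e x y ≤ 1)
    (hE : κ ≤ ∑ x ∈ V, ∑ y ∈ V, w x * w y * e x y) :
    ∃ X ⊆ V, ∃ Y ⊆ V, κ / 6 ≤ ∑ x ∈ X, w x ∧ κ / 4 ≤ ∑ y ∈ Y, w y ∧
      ∀ x ∈ X, ∀ y ∈ Y, κ ^ 5 / 3072 ≤
        ∑ x₁ ∈ V, ∑ y₁ ∈ V, w x₁ * w y₁ * (e x y₁ * e x₁ y₁ * e x₁ y) := by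
  classical
  set deg : α → ℝ := fun x => ∑ y ∈ V, w y * e x y with hdeg
  set cod : α → α → ℝ := fun x x' => ∑ y ∈ V, w y * (e x y * e x' y) with hcod
  -- the indicator function of the vertices of high degree
  set χ : α → ℝ := fun x => if κ / 2 ≤ deg x then 1 else 0 with hχ
  have hχ0 : ∀ x, 0 ≤ χ x := fun x => by simp only [hχ]; split_ifs <;> norm_num
  have hχ1 : ∀ x, χ x ≤ 1 := fun x => by simp only [hχ]; split_ifs <;> norm_num
  set c : ℝ := κ ^ 3 / 128 with hc
  have hcpos : 0 < c := by positivity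
  -- the indicator function of the pairs with few common neighbours
  set b : α → α → ℝ := fun x x' => if cod x x' < c then 1 else 0 with hb
  have hb0 : ∀ x x', 0 ≤ b x x' := fun x x' => by simp only [hb]; split_ifs <;> norm_num
  have hcod0 : ∀ x x', 0 ≤ cod x x' := fun x x' =>
    sum_nonneg fun y _ => mul_nonneg (hw y) (mul_nonneg (he0 _ _) (he0 _ _))
  -- `a y` is the weight `w` restricted to the high-degree neighbours of `y`
  set a : α → α → ℝ := fun y x => w x * χ x * e x y with ha
  have ha0 : ∀ y x, 0 ≤ a y x := fun y x => mul_nonneg (mul_nonneg (hw x) (hχ0 x)) (he0 _ _)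
  have haw : ∀ y x, a y x ≤ w x := fun y x => by
    have h1 : χ x * e x y ≤ 1 := mul_le_one₀ (hχ1 x) (he0 _ _) (he1 _ _)
    calc a y x = w x * (χ x * e x y) := by simp only [ha]; ring
      _ ≤ w x * 1 := mul_le_mul_of_nonneg_left h1 (hw x)
      _ = w x := mul_one _
  set m : α → ℝ := fun y => ∑ x ∈ V, a y x with hm
  set Bd : α → ℝ := fun y => ∑ x ∈ V, ∑ x' ∈ V, a y x * a y x' * b x x' with hBd
  have hm_sum : κ / 2 ≤ ∑ y ∈ V, w y * m y := by
    have h1 : ∑ y ∈ V, w y * m y = ∑ x ∈ V, w x * (χ x * deg x) := by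
      simp only [hm, ha, hdeg, mul_sum]
      rw [sum_comm]
      exact sum_congr rfl fun x _ => sum_congr rfl fun y _ => by ring
    have h2 : ∑ x ∈ V, ∑ y ∈ V, w x * w y * e x y = ∑ x ∈ V, w x * deg x := by
      simp only [hdeg, mul_sum]
      exact sum_congr rfl fun x _ => sum_congr rfl fun y _ => by ring
    have h3 : ∀ x ∈ V, w x * deg x ≤ w x * (χ x * deg x) + w x * (κ / 2) := by
      intro x _
      rw [← mul_add]
      refine mul_le_mul_of_nonneg_left ?_ (hw x)
      simp only [hχ]
      split_ifs with h
      · linarith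
      · linarith [not_le.1 h]
    have h4 := sum_le_sum h3
    rw [sum_add_distrib, ← sum_mul] at h4
    nlinarith
  have hm_sq : κ ^ 2 / 4 ≤ ∑ y ∈ V, w y * m y ^ 2 := by
    have h3 : ∀ y ∈ V, w y * m y * κ - w y * (κ ^ 2 / 4) ≤ w y * m y ^ 2 := by
      intro y _
      nlinarith [mul_nonneg (hw y) (sq_nonneg (m y - κ / 2))]
    have h4 := sum_le_sum h3
    rw [sum_sub_distrib, ← sum_mul, ← sum_mul] at h4
    nlinarith
  have hBd_sum : ∑ y ∈ V, w y * Bd y ≤ c := by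
    have h1 : ∑ y ∈ V, w y * Bd y
        = ∑ x ∈ V, ∑ x' ∈ V, (w x * χ x) * (w x' * χ x') * (b x x' * cod x x') := by
      simp only [hBd, ha, hcod, mul_sum]
      rw [sum_comm]
      refine sum_congr rfl fun x _ => ?_
      rw [sum_comm]
      exact sum_congr rfl fun x' _ => sum_congr rfl fun y _ => by ring
    have h2 : ∀ x ∈ V, ∀ x' ∈ V,
        (w x * χ x) * (w x' * χ x') * (b x x' * cod x x') ≤ w x * w x' * c := by
      intro x _ x' _
      have hbc : b x x' * cod x x' ≤ c := by
        simp only [hb]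
        split_ifs with h
        · linarith
        · linarith
      have e1 : w x * χ x ≤ w x := mul_le_of_le_one_right (hw x) (hχ1 x)
      have e2 : w x' * χ x' ≤ w x' := mul_le_of_le_one_right (hw x') (hχ1 x')
      exact mul_le_mul (mul_le_mul e1 e2 (mul_nonneg (hw _) (hχ0 _)) (hw _)) hbc
        (mul_nonneg (hb0 _ _) (hcod0 _ _)) (mul_nonneg (hw _) (hw _))
    have h3 : ∑ x ∈ V, ∑ x' ∈ V, w x * w x' * c = (∑ x ∈ V, w x) * (∑ x ∈ V, w x) * c := by
      rw [sum_mul_sum, sum_mul]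
      exact sum_congr rfl fun x _ => by rw [sum_mul]
    rw [h1]
    refine (sum_le_sum fun x hx => sum_le_sum fun x' hx' => h2 x hx x' hx').trans ?_
    rw [h3]
    have h0 : 0 ≤ ∑ x ∈ V, w x := sum_nonneg fun x _ => hw x
    exact mul_le_of_le_one_left hcpos.le (mul_le_one₀ hw1 h0 hw1)
  -- averaging over `y` with weight `w`
  obtain ⟨y₀, hy₀⟩ : ∃ y, κ ^ 2 / 9 ≤ m y ^ 2 - Bd y * (16 / κ) := by
    by_contra hcon
    push Not at hcon
    have h3 : ∀ y ∈ V, w y * m y ^ 2 - (w y * Bd y) * (16 / κ) ≤ w y * (κ ^ 2 / 9) := by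
      intro y _
      have := mul_le_mul_of_nonneg_left (hcon y).le (hw y)
      linarith
    have h4 := sum_le_sum h3
    rw [sum_sub_distrib, ← sum_mul, ← sum_mul] at h4
    have h5 : (∑ y ∈ V, w y * Bd y) * (16 / κ) ≤ κ ^ 2 / 8 := by
      calc _ ≤ c * (16 / κ) := mul_le_mul_of_nonneg_right hBd_sum (by positivity)
        _ = κ ^ 2 / 8 := by rw [hc]; field_simp; norm_num
    have h6 : (∑ y ∈ V, w y) * (κ ^ 2 / 9) ≤ κ ^ 2 / 9 :=
      mul_le_of_le_one_left (by positivity) hw1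
    nlinarith [sq_pos_of_pos hκ]
  have hBd0 : 0 ≤ Bd y₀ := sum_nonneg fun x _ => sum_nonneg fun x' _ =>
    mul_nonneg (mul_nonneg (ha0 _ _) (ha0 _ _)) (hb0 _ _)
  have hm0 : 0 ≤ m y₀ := sum_nonneg fun x _ => ha0 _ _
  have hmκ : κ / 3 ≤ m y₀ := by
    have : 0 ≤ Bd y₀ * (16 / κ) := by positivity
    refine le_of_sq_le_sq ?_ hm0
    nlinarith
  have hmpos : 0 < m y₀ := by linarith
  have hBm : Bd y₀ ≤ κ / 16 * m y₀ ^ 2 := by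
    have h1 : Bd y₀ * (16 / κ) ≤ m y₀ ^ 2 := by nlinarith [sq_nonneg κ]
    have h2 := mul_le_mul_of_nonneg_left h1 (show 0 ≤ κ / 16 by positivity)
    have h3 : κ / 16 * (Bd y₀ * (16 / κ)) = Bd y₀ := by field_simp
    linarith
  set bx : α → ℝ := fun x => ∑ x' ∈ V, a y₀ x' * b x x' with hbx
  set ny : α → ℝ := fun y => ∑ x ∈ V, a y₀ x * e x y with hny
  refine ⟨V.filter fun x => bx x ≤ κ / 8 * m y₀, filter_subset _ _,
    V.filter fun y => κ / 4 * m y₀ ≤ ny y, filter_subset _ _, ?_, ?_, ?_⟩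
  · have h1 : Bd y₀ = ∑ x ∈ V, a y₀ x * bx x := by
      simp only [hBd, hbx, mul_sum]
      exact sum_congr rfl fun x _ => sum_congr rfl fun y _ => by ring
    have h2 : ∀ x ∈ V, a y₀ x * (κ / 8 * m y₀) ≤
        (if bx x ≤ κ / 8 * m y₀ then w x else 0) * (κ / 8 * m y₀) + a y₀ x * bx x := by
      intro x _
      have hbx0 : 0 ≤ bx x := sum_nonneg fun x' _ => mul_nonneg (ha0 _ _) (hb0 _ _)
      split_ifs with h
      · have := mul_le_mul_of_nonneg_right (haw y₀ x) (show 0 ≤ κ / 8 * m y₀ by positivity)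
        have := mul_nonneg (ha0 y₀ x) hbx0
        linarith
      · have := mul_le_mul_of_nonneg_left (not_le.1 h).le (ha0 y₀ x)
        linarith
    have h3 := sum_le_sum h2
    rw [sum_add_distrib, ← sum_mul, ← sum_mul, ← h1, ← sum_filter] at h3
    have h4 : (κ / 8 * m y₀) * (m y₀ / 2) ≤ (κ / 8 * m y₀) *
        ∑ x ∈ V.filter fun x => bx x ≤ κ / 8 * m y₀, w x := by
      have : (∑ x ∈ V, a y₀ x) = m y₀ := rfl
      rw [this] at h3
      nlinarith
    have := le_of_mul_le_mul_left h4 (by positivity)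
    linarith
  · have h1 : κ / 2 * m y₀ ≤ ∑ y ∈ V, w y * ny y := by
      have e1 : ∑ y ∈ V, w y * ny y = ∑ x ∈ V, a y₀ x * deg x := by
        simp only [hny, hdeg, mul_sum]
        rw [sum_comm]
        exact sum_congr rfl fun x _ => sum_congr rfl fun y _ => by ring
      rw [e1, hm, mul_sum]
      refine sum_le_sum fun x _ => ?_
      by_cases h : κ / 2 ≤ deg x
      · nlinarith [ha0 y₀ x]
      · have : a y₀ x = 0 := by simp [ha, hχ, h]
        simp [this]
    have hnm : ∀ y, ny y ≤ m y₀ := fun y => sum_le_sum fun x _ =>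
      mul_le_of_le_one_right (ha0 _ _) (he1 _ _)
    have h2 : ∀ y ∈ V, w y * ny y ≤
        (if κ / 4 * m y₀ ≤ ny y then w y else 0) * m y₀ + w y * (κ / 4 * m y₀) := by
      intro y _
      split_ifs with h
      · have := mul_le_mul_of_nonneg_left (hnm y) (hw y)
        have := mul_nonneg (hw y) (show 0 ≤ κ / 4 * m y₀ by positivity)
        linarith
      · have := mul_le_mul_of_nonneg_left (not_le.1 h).le (hw y)
        linarith
    have h3 := sum_le_sum h2
    rw [sum_add_distrib, ← sum_mul, ← sum_mul, ← sum_filter] at h3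
    have h4 : (∑ y ∈ V, w y) * (κ / 4 * m y₀) ≤ κ / 4 * m y₀ :=
      mul_le_of_le_one_left (by positivity) hw1
    refine le_of_mul_le_mul_right ?_ hmpos
    linarith
  · intro x hx y hy
    have hx' := (mem_filter.1 hx).2
    have hy' := (mem_filter.1 hy).2
    have h1 : ∑ x₁ ∈ V, ∑ y₁ ∈ V, w x₁ * w y₁ * (e x y₁ * e x₁ y₁ * e x₁ y)
        = ∑ x₁ ∈ V, w x₁ * e x₁ y * cod x x₁ := by
      simp only [hcod, mul_sum]
      exact sum_congr rfl fun x _ => sum_congr rfl fun y _ => by ring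
    have h2 : ∀ x₁ ∈ V, (a y₀ x₁ * e x₁ y) * c - (a y₀ x₁ * b x x₁) * c ≤
        w x₁ * e x₁ y * cod x x₁ := by
      intro x₁ _
      have e1 : a y₀ x₁ * e x₁ y ≤ w x₁ * e x₁ y :=
        mul_le_mul_of_nonneg_right (haw _ _) (he0 _ _)
      have e2 : a y₀ x₁ * e x₁ y ≤ a y₀ x₁ := mul_le_of_le_one_right (ha0 _ _) (he1 _ _)
      have e3 : 0 ≤ a y₀ x₁ * e x₁ y := mul_nonneg (ha0 _ _) (he0 _ _)
      by_cases h : cod x x₁ < c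
      · have : b x x₁ = 1 := by simp [hb, h]
        rw [this]
        have := mul_nonneg (e3.trans e1) (hcod0 x x₁)
        nlinarith
      · have : b x x₁ = 0 := by simp [hb, h]
        rw [this]
        have := mul_le_mul e1 (not_lt.1 h) hcpos.le (e3.trans e1)
        linarith
    have h3 := sum_le_sum h2
    rw [sum_sub_distrib, ← sum_mul, ← sum_mul, ← h1] at h3
    refine le_trans ?_ h3
    have h4 : κ / 8 * m y₀ * c ≤ (ny y - bx x) * c :=
      mul_le_mul_of_nonneg_right (by linarith) hcpos.le
    have h5 : κ / 8 * (κ / 3) * c ≤ κ / 8 * m y₀ * c := by gcongr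
    have h6 : κ / 8 * (κ / 3) * c = κ ^ 5 / 3072 := by rw [hc]; ring
    simp only [hny, hbx] at h4
    linarith

/-! ### Popular differences and small difference sets -/

section Walk

variable {G : Type*} [AddCommGroup G]

/-- The autocorrelation `d ↦ ∑ x ∈ V, f x * f (x + d)`. -/
def corr (V : Finset G) (f : G → ℝ) (d : G) : ℝ := ∑ x ∈ V, f x * f (x + d)

lemma corr_nonneg {V : Finset G} {f : G → ℝ} (h0 : ∀ x, 0 ≤ f x) (d : G) : 0 ≤ corr V f d :=
  sum_nonneg fun _ _ => mul_nonneg (h0 _) (h0 _)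

variable [DecidableEq G]

/-- The proportion of `a ∈ A` with `a + d ∈ A`. -/
noncomputable def pop (A : Finset G) (d : G) : ℝ :=
  (#{a ∈ A | a + d ∈ A} : ℝ) / #A

lemma pop_nonneg (A : Finset G) (d : G) : 0 ≤ pop A d := by unfold pop; positivity

lemma pop_le_one (A : Finset G) (d : G) : pop A d ≤ 1 := by
  unfold pop
  exact div_le_one_of_le₀ (by exact_mod_cast card_filter_le _ _) (by positivity)

lemma pop_eq_zero {A : Finset G} {d : G} (h : d ∉ A - A) : pop A d = 0 := by
  unfold pop
  rw [filter_false_of_mem, card_empty]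
  · simp
  · intro a ha h'
    exact h (by simpa using sub_mem_sub h' ha)

lemma pop_mul_card {A : Finset G} (hA : A.Nonempty) (d : G) :
    pop A d * #A = #{a ∈ A | a + d ∈ A} := by
  unfold pop
  have : (#A : ℝ) ≠ 0 := by exact_mod_cast hA.card_pos.ne'
  field_simp

lemma sum_shift_le {V : Finset G} {h : G → ℝ} (h0 : ∀ x, 0 ≤ h x) (hV : ∀ x, x ∉ V → h x = 0)
    (Y : Finset G) (t : G) : ∑ d ∈ Y, h (t + d) ≤ ∑ x ∈ V, h x := by
  have h1 : ∑ d ∈ Y, h (t + d) = ∑ x ∈ Y.image (t + ·), h x := by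
    rw [sum_image]
    intro x _ y _ hxy
    simpa using hxy
  rw [h1, ← sum_filter_add_sum_filter_not (Y.image (t + ·)) (· ∈ V)]
  have h2 : ∑ x ∈ (Y.image (t + ·)) with x ∉ V, h x = 0 :=
    sum_eq_zero fun x hx => hV x (mem_filter.1 hx).2
  rw [h2, add_zero]
  exact sum_le_sum_of_subset_of_nonneg (fun x hx => (mem_filter.1 hx).2) fun x _ _ => h0 x

lemma corr_le {V : Finset G} {f : G → ℝ} (hV : ∀ x, x ∉ V → f x = 0) (d : G) :
    corr V f d ≤ ∑ x ∈ V, f x ^ 2 := by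
  have h1 : ∀ x ∈ V, f x * f (x + d) ≤ f x ^ 2 / 2 + f (d + x) ^ 2 / 2 := fun x _ => by
    rw [add_comm d x]; nlinarith [sq_nonneg (f x - f (x + d))]
  have h2 := sum_le_sum h1
  rw [sum_add_distrib, ← sum_div, ← sum_div] at h2
  have h3 : ∑ x ∈ V, f (d + x) ^ 2 ≤ ∑ x ∈ V, f x ^ 2 :=
    sum_shift_le (h := fun x => f x ^ 2) (fun x => sq_nonneg _) (fun x hx => by simp [hV x hx]) V d
  unfold corr
  linarith

lemma sum_corr_le {V : Finset G} {f : G → ℝ} (h0 : ∀ x, 0 ≤ f x)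
    (hV : ∀ x, x ∉ V → f x = 0) (h1 : ∑ x ∈ V, f x ≤ 1) (Y : Finset G) :
    ∑ d ∈ Y, corr V f d ≤ 1 := by
  unfold corr
  rw [sum_comm]
  refine le_trans (sum_le_sum fun x _ => ?_) h1
  rw [← mul_sum]
  exact mul_le_of_le_one_right (h0 x) ((sum_shift_le h0 hV Y x).trans h1)

/-- A bounded weight `f` whose autocorrelation has nearly maximal square sum lives, up to powers
of `κ`, on sets `X`, `Y` with few differences. This is the Balog–Szemerédi–Gowers argument: a path
`x, y₁, x₁, y` of popular differences writes `y - x` as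
`(y₁ - x) - (y₁ - x₁) + (y - x₁)`, and `Y - X` is small because each of its elements has many such
representations. -/
lemma exists_small_diff {V : Finset G} {f : G → ℝ} {N κ : ℝ} (hN : 0 < N) (hκ : 0 < κ)
    (h0 : ∀ x, 0 ≤ f x) (hfN : ∀ x, f x ≤ N) (hV : ∀ x, x ∉ V → f x = 0)
    (h1 : ∑ x ∈ V, f x ≤ 1) (hQ : 2 * κ * N ≤ ∑ d ∈ V, corr V f d ^ 2) :
    ∃ X ⊆ V, ∃ Y ⊆ V, κ / 6 ≤ ∑ x ∈ X, f x ∧ κ / 4 ≤ ∑ y ∈ Y, f y ∧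
      (#(Y - X) : ℝ) * N ≤ 3072 / κ ^ 8 := by
  have hu0 := corr_nonneg (V := V) h0
  have huN : ∀ d, corr V f d ≤ N := fun d => by
    refine (corr_le hV d).trans ?_
    calc ∑ x ∈ V, f x ^ 2 ≤ ∑ x ∈ V, f x * N :=
          sum_le_sum fun x _ => by rw [sq]; exact mul_le_mul_of_nonneg_left (hfN x) (h0 x)
      _ = (∑ x ∈ V, f x) * N := by rw [sum_mul]
      _ ≤ N := mul_le_of_le_one_left hN.le h1
  -- the popular differences
  set P : Finset G := V.filter fun d => κ * N ≤ corr V f d with hP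
  have hPcard : (#P : ℝ) * (κ * N) ≤ 1 := by
    refine le_trans ?_ (sum_corr_le h0 hV h1 P)
    rw [← nsmul_eq_mul]
    exact card_nsmul_le_sum _ _ _ fun d hd => (mem_filter.1 hd).2
  have hPsum : κ ≤ ∑ d ∈ P, corr V f d := by
    have h2 : ∀ d ∈ V, corr V f d ^ 2 ≤
        (if κ * N ≤ corr V f d then corr V f d else 0) * N + corr V f d * (κ * N) := by
      intro d _
      split_ifs with h
      · have := mul_le_mul_of_nonneg_left (huN d) (hu0 d)
        have : 0 ≤ corr V f d * (κ * N) := mul_nonneg (hu0 d) (by positivity)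
        nlinarith
      · have := mul_le_mul_of_nonneg_left (not_le.1 h).le (hu0 d)
        nlinarith
    have h3 := sum_le_sum h2
    rw [sum_add_distrib, ← sum_mul, ← sum_mul, ← sum_filter] at h3
    have h4 : (∑ d ∈ V, corr V f d) * (κ * N) ≤ κ * N :=
      mul_le_of_le_one_left (by positivity) (sum_corr_le h0 hV h1 V)
    refine le_of_mul_le_mul_right ?_ hN
    linarith
  set e : G → G → ℝ := fun x y => if y - x ∈ P then 1 else 0 with he
  have hE : κ ≤ ∑ x ∈ V, ∑ y ∈ V, f x * f y * e x y := by
    refine hPsum.trans ?_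
    unfold corr
    rw [sum_comm]
    refine sum_le_sum fun x _ => ?_
    have h2 : ∑ d ∈ P, f x * f (x + d) = ∑ d ∈ P, (fun y => f x * f y * e x y) (x + d) := by
      refine sum_congr rfl fun d hd => ?_
      simp [he, hd]
    rw [h2]
    refine sum_shift_le (h := fun y => f x * f y * e x y) (fun y => ?_) (fun y hy => ?_) P x
    · have : 0 ≤ e x y := by simp only [he]; split_ifs <;> norm_num
      exact mul_nonneg (mul_nonneg (h0 _) (h0 _)) this
    · simp [hV y hy]
  obtain ⟨X, hX, Y, hY, hXw, hYw, hpath⟩ := exists_paths V f e κ hκ h0 h1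
    (fun x y => by simp only [he]; split_ifs <;> norm_num)
    (fun x y => by simp only [he]; split_ifs <;> norm_num) hE
  refine ⟨X, hX, Y, hY, hXw, hYw, ?_⟩
  have hrep : ∀ z : G, ∃ p : G × G, z ∈ Y - X → p.1 ∈ X ∧ p.2 ∈ Y ∧ p.2 - p.1 = z := by
    intro z
    by_cases hz : z ∈ Y - X
    · obtain ⟨y, hy, x, hx, rfl⟩ := mem_sub.1 hz
      exact ⟨(x, y), fun _ => ⟨hx, hy, rfl⟩⟩
    · exact ⟨(0, 0), fun h => absurd h hz⟩
  choose rep hrep using hrep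
  -- `T z` is the set of inner vertices `(x₁, y₁)` of the paths between the ends chosen for `z`
  set T : G → Finset (G × G) := fun z => (V ×ˢ V).filter fun q =>
    q.2 - (rep z).1 ∈ P ∧ q.2 - q.1 ∈ P ∧ (rep z).2 - q.1 ∈ P with hT
  have hTcard : ∀ z ∈ Y - X, κ ^ 5 / 3072 ≤ (#(T z) : ℝ) * N ^ 2 := by
    intro z hz
    obtain ⟨hx, hy, -⟩ := hrep z hz
    refine (hpath _ hx _ hy).trans ?_
    rw [← sum_product' V V (fun x₁ y₁ =>
      f x₁ * f y₁ * (e (rep z).1 y₁ * e x₁ y₁ * e x₁ (rep z).2)), ← nsmul_eq_mul, ← sum_const,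
      hT, sum_filter]
    refine sum_le_sum fun q _ => ?_
    have hff : f q.1 * f q.2 ≤ N ^ 2 := by
      rw [sq]; exact mul_le_mul (hfN _) (hfN _) (h0 _) hN.le
    by_cases h1 : q.2 - (rep z).1 ∈ P <;> by_cases h2 : q.2 - q.1 ∈ P <;>
      by_cases h3 : (rep z).2 - q.1 ∈ P <;> simp [he, h1, h2, h3, hff]
  have hsig : #((Y - X).sigma T) ≤ #(P ×ˢ P ×ˢ P) := by
    refine card_le_card_of_injOn
      (fun s => (s.2.2 - (rep s.1).1, s.2.2 - s.2.1, (rep s.1).2 - s.2.1)) ?_ ?_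
    · rintro ⟨z, q⟩ hs
      have hs' := (mem_sigma.1 hs).2
      simp only [hT, mem_filter] at hs'
      simp only [coe_product, Set.mem_prod, mem_coe]
      exact hs'.2
    · rintro ⟨z, q⟩ hs ⟨z', q'⟩ hs' heq
      simp only [Prod.mk.injEq] at heq
      obtain ⟨e1, e2, e3⟩ := heq
      have hz := (hrep z (mem_sigma.1 hs).1).2.2
      have hz' := (hrep z' (mem_sigma.1 hs').1).2.2
      have hzz : z = z' := by
        rw [← hz, ← hz']
        calc (rep z).2 - (rep z).1
            = (q.2 - (rep z).1) - (q.2 - q.1) + ((rep z).2 - q.1) := by abel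
          _ = (q'.2 - (rep z').1) - (q'.2 - q'.1) + ((rep z').2 - q'.1) := by rw [e1, e2, e3]
          _ = (rep z').2 - (rep z').1 := by abel
      subst hzz
      have hq2 : q.2 = q'.2 := by simpa using e1
      have hq1 : q.1 = q'.1 := by simpa using e3
      have : q = q' := Prod.ext hq1 hq2
      rw [this]
  have hsig' : (#(Y - X) : ℝ) * (κ ^ 5 / 3072) ≤ (#P : ℝ) ^ 3 * N ^ 2 := by
    have h2 : (∑ z ∈ Y - X, (#(T z) : ℝ)) ≤ (#P : ℝ) ^ 3 := by
      rw [card_sigma, card_product, card_product] at hsig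
      calc (∑ z ∈ Y - X, (#(T z) : ℝ)) = ((∑ z ∈ Y - X, #(T z) : ℕ) : ℝ) := by push_cast; rfl
        _ ≤ ((#P * (#P * #P) : ℕ) : ℝ) := by exact_mod_cast hsig
        _ = (#P : ℝ) ^ 3 := by push_cast; ring
    calc (#(Y - X) : ℝ) * (κ ^ 5 / 3072) ≤ ∑ z ∈ Y - X, (#(T z) : ℝ) * N ^ 2 := by
          rw [← nsmul_eq_mul]; exact card_nsmul_le_sum _ _ _ hTcard
      _ = (∑ z ∈ Y - X, (#(T z) : ℝ)) * N ^ 2 := by rw [sum_mul]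
      _ ≤ _ := mul_le_mul_of_nonneg_right h2 (by positivity)
  have hP3 : ((#P : ℝ) * (κ * N)) ^ 3 ≤ 1 := pow_le_one₀ (by positivity) hPcard
  rw [le_div_iff₀ (by positivity)]
  have h5 : (#(Y - X) : ℝ) * (κ ^ 5 / 3072) * (κ ^ 3 * N) ≤ (#P : ℝ) ^ 3 * N ^ 2 * (κ ^ 3 * N) :=
    mul_le_mul_of_nonneg_right hsig' (by positivity)
  nlinarith

/-- A weight `f` as in `exists_small_diff` yields `A'` and `B'`, provided that almost all of its mass
is on popular differences of `A` (`hbad`), and that the mass of a set bounds from below the share of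
`B` in some translate of that set (`hBt`). For `X`, `Y` from `exists_small_diff`, `B'` is the part of
`B` in a translate of `Y`, and `A'` consists of the `a ∈ A` with `a + d ∈ A` for many of the `d ∈ X`
that are popular differences of `A`. -/
lemma finish {A B V : Finset G} {f : G → ℝ} {N κ : ℝ} (hA : A.Nonempty) (hB : B.Nonempty)
    (hN : 0 < N) (hκ : 0 < κ)
    (h0 : ∀ x, 0 ≤ f x) (hfN : ∀ x, f x ≤ N) (hV : ∀ x, x ∉ V → f x = 0)
    (h1 : ∑ x ∈ V, f x ≤ 1) (hQ : 2 * κ * N ≤ ∑ d ∈ V, corr V f d ^ 2)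
    (hbad : ∑ x ∈ V with pop A x < κ, f x ≤ κ / 12)
    (hBt : ∀ (Y : Finset G) (M : ℝ), (∀ t, (#{b ∈ B | b - t ∈ Y} : ℝ) ≤ M) →
      (∑ x ∈ Y, f x) * #B ≤ M) :
    ∃ A' B' : Finset G, A' ⊆ A ∧ B' ⊆ B ∧ κ / 2 * #A ≤ #A' ∧ κ / 8 * #B ≤ #B' ∧
      (#(A' + B') : ℝ) ≤ 147456 / κ ^ 11 * #A' := by
  obtain ⟨X, hX, Y, hY, hXw, hYw, hYX⟩ := exists_small_diff hN hκ h0 hfN hV h1 hQ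
  have hApos : (0 : ℝ) < #A := by exact_mod_cast hA.card_pos
  have hBpos : (0 : ℝ) < #B := by exact_mod_cast hB.card_pos
  obtain ⟨t, ht⟩ : ∃ t, κ / 8 * #B < #{b ∈ B | b - t ∈ Y} := by
    by_contra hcon
    push Not at hcon
    have := hBt Y _ hcon
    nlinarith [mul_le_mul_of_nonneg_right hYw hBpos.le, mul_pos hκ hBpos]
  set D : Finset G := X.filter fun x => κ ≤ pop A x with hD
  have hDw : κ / 12 ≤ ∑ x ∈ D, f x := by
    have h2 := sum_filter_add_sum_filter_not X (fun x => κ ≤ pop A x) f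
    have h3 : ∑ x ∈ X with ¬ κ ≤ pop A x, f x ≤ ∑ x ∈ V with pop A x < κ, f x := by
      refine sum_le_sum_of_subset_of_nonneg (fun x hx => ?_) fun x _ _ => h0 x
      rw [mem_filter] at hx ⊢
      exact ⟨hX hx.1, not_le.1 hx.2⟩
    linarith
  have hDcard : κ / 12 ≤ #D * N := by
    refine hDw.trans ?_
    rw [← nsmul_eq_mul]
    exact sum_le_card_nsmul _ _ _ fun x _ => hfN x
  have hDpos : (0 : ℝ) < #D := by
    by_contra h
    nlinarith
  set n : G → ℝ := fun a => #{d ∈ D | a + d ∈ A} with hn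
  have hnsum : κ * #A * #D ≤ ∑ a ∈ A, n a := by
    have h2 : ∑ a ∈ A, n a = ∑ d ∈ D, (#{a ∈ A | a + d ∈ A} : ℝ) := by
      have := sum_card_bipartiteAbove_eq_sum_card_bipartiteBelow (s := A) (t := D)
        (fun a d => a + d ∈ A)
      simp only [bipartiteAbove, bipartiteBelow] at this
      simp only [hn]
      exact_mod_cast this
    rw [h2, mul_comm, ← nsmul_eq_mul]
    refine card_nsmul_le_sum _ _ _ fun d hd => ?_
    rw [← pop_mul_card hA]
    exact mul_le_mul_of_nonneg_right (mem_filter.1 hd).2 hApos.le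
  set A' : Finset G := A.filter fun a => κ / 2 * #D ≤ n a with hA'
  have hA'card : κ / 2 * #A ≤ #A' := by
    have h2 : ∀ a ∈ A, n a ≤ (if κ / 2 * #D ≤ n a then 1 else 0) * (#D : ℝ) + κ / 2 * #D := by
      intro a _
      split_ifs with h
      · have : n a ≤ #D := by simp only [hn]; exact_mod_cast card_filter_le _ _
        have : 0 ≤ κ / 2 * #D := by positivity
        linarith
      · linarith [not_le.1 h]
    have h3 := sum_le_sum h2
    rw [sum_add_distrib, ← sum_mul, sum_const, nsmul_eq_mul, ← sum_filter, sum_const,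
      nsmul_eq_mul, mul_one] at h3
    refine le_of_mul_le_mul_right ?_ hDpos
    linarith
  refine ⟨A', {b ∈ B | b - t ∈ Y}, filter_subset _ _, filter_subset _ _, hA'card, ht.le, ?_⟩
  have hsub : #(A' + {b ∈ B | b - t ∈ Y}) ≤ #(A' + Y) := by
    refine card_le_card_of_injOn (fun x => x - t) ?_ (fun x _ y _ hxy => by simpa using hxy)
    intro x hx
    obtain ⟨a, ha, b, hb, rfl⟩ := mem_add.1 (mem_coe.1 hx)
    exact mem_coe.2 (mem_add.2 ⟨a, ha, b - t, (mem_filter.1 hb).2,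
      (add_sub_assoc a b t).symm⟩)
  -- every element of `A' + Y` has many representations as an element of `A + (Y - X)`
  have hcount : (#(A' + Y) : ℝ) * (κ / 2 * #D) ≤ #A * #(Y - X) := by
    have h2 : ∀ z ∈ A' + Y, κ / 2 * #D ≤ (#{c ∈ A | z - c ∈ Y - X} : ℝ) := by
      intro z hz
      obtain ⟨a, ha, y, hy, rfl⟩ := mem_add.1 hz
      refine (mem_filter.1 ha).2.trans ?_
      simp only [hn]
      norm_cast
      refine card_le_card_of_injOn (fun d => a + d) ?_ (fun x _ y _ hxy => by simpa using hxy)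
      intro d hd
      have hd' := mem_filter.1 (mem_coe.1 hd)
      refine mem_coe.2 (mem_filter.2 ⟨hd'.2, ?_⟩)
      refine mem_sub.2 ⟨y, hy, d, (mem_filter.1 hd'.1).1, ?_⟩
      change y - d = a + y - (a + d)
      abel
    have h3 : (∑ z ∈ A' + Y, #{c ∈ A | z - c ∈ Y - X}) ≤ #A * #(Y - X) := by
      have := sum_card_bipartiteAbove_eq_sum_card_bipartiteBelow (s := A' + Y) (t := A)
        (fun z c => z - c ∈ Y - X)
      simp only [bipartiteAbove, bipartiteBelow] at this
      rw [this, ← smul_eq_mul]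
      refine sum_le_card_nsmul _ _ _ fun c _ => ?_
      refine card_le_card_of_injOn (fun z => z - c) ?_ (fun x _ y _ hxy => by simpa using hxy)
      intro z hz
      exact (mem_filter.1 (mem_coe.1 hz)).2
    rw [← nsmul_eq_mul]
    refine (card_nsmul_le_sum _ _ _ h2).trans ?_
    exact_mod_cast h3
  have hle : (#(A' + {b ∈ B | b - t ∈ Y}) : ℝ) ≤ #(A' + Y) := by exact_mod_cast hsub
  refine hle.trans ?_
  set S : ℝ := ((#(A' + Y) : ℕ) : ℝ)
  have hS0 : 0 ≤ S := Nat.cast_nonneg _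
  have k1 : S * (κ / 2 * (κ / 12)) ≤ S * (κ / 2 * (#D * N)) := by gcongr
  have k2 : S * (κ / 2 * #D) * N ≤ #A * #(Y - X) * N := mul_le_mul_of_nonneg_right hcount hN.le
  have k3 : (#A : ℝ) * (#(Y - X) * N) ≤ #A * (3072 / κ ^ 8) :=
    mul_le_mul_of_nonneg_left hYX hApos.le
  have k4 : S * (κ ^ 2 / 24) ≤ #A * (3072 / κ ^ 8) := by nlinarith
  have k5 : (#A : ℝ) ≤ 2 / κ * #A' := by
    rw [div_mul_eq_mul_div, le_div_iff₀ hκ]; linarith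
  have k6 : S * (κ ^ 2 / 24) ≤ (2 / κ * #A') * (3072 / κ ^ 8) :=
    k4.trans (mul_le_mul_of_nonneg_right k5 (by positivity))
  have k7 : (2 / κ * (#A' : ℝ)) * (3072 / κ ^ 8) = (147456 / κ ^ 11 * #A') * (κ ^ 2 / 24) := by
    field_simp; ring
  rw [k7] at k6
  exact le_of_mul_le_mul_right k6 (by positivity)

/-! ### The walk -/
/-- One step of the walk: autocorrelate, then damp by the square of `pop A`. -/
noncomputable def walkStep (A V : Finset G) (f : G → ℝ) (d : G) : ℝ := corr V f d * pop A d ^ 2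

/-- The correlation of `A` with its translates along the autocorrelation of `f`. -/
noncomputable def cor (A V : Finset G) (f : G → ℝ) : ℝ := ∑ d ∈ V, corr V f d * pop A d

/-- The properties of the uniform weight on `B` that `walkStep` preserves: `f` is a nonnegative weight
on `V` of total mass at most `1`, and it gives no set more mass than the uniform measure on `B`
gives to the best translate of that set. -/
structure Good (B V : Finset G) (f : G → ℝ) : Prop where
  nonneg : ∀ x, 0 ≤ f x
  supp : ∀ x, x ∉ V → f x = 0
  mass : ∑ x ∈ V, f x ≤ 1
  transfer : ∀ (Y : Finset G) (M : ℝ), (∀ t, (#{b ∈ B | b - t ∈ Y} : ℝ) ≤ M) →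
      (∑ x ∈ Y, f x) * #B ≤ M

lemma step_nonneg {A V : Finset G} {f : G → ℝ} (h0 : ∀ x, 0 ≤ f x) (d : G) :
    0 ≤ walkStep A V f d := mul_nonneg (corr_nonneg h0 d) (sq_nonneg _)

lemma step_le_corr {A V : Finset G} {f : G → ℝ} (h0 : ∀ x, 0 ≤ f x) (d : G) :
    walkStep A V f d ≤ corr V f d :=
  mul_le_of_le_one_right (corr_nonneg h0 d) (pow_le_one₀ (pop_nonneg _ _) (pop_le_one _ _))

lemma Good.step {A B V : Finset G} {f : G → ℝ} (hf : Good B V f) (hAV : A - A ⊆ V) :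
    Good B V (walkStep A V f) where
  nonneg := step_nonneg hf.nonneg
  supp x hx := by simp [walkStep, pop_eq_zero fun h => hx (hAV h)]
  mass := (sum_le_sum fun d _ => step_le_corr hf.nonneg d).trans
    (sum_corr_le hf.nonneg hf.supp hf.mass V)
  transfer Y M hM := by
    have hM0 : 0 ≤ M := (Nat.cast_nonneg _).trans (hM 0)
    have h1 : ∀ x, (∑ d ∈ Y, f (x + d)) * #B ≤ M := by
      intro x
      have h2 : ∑ d ∈ Y, f (x + d) = ∑ z ∈ Y.image (x + ·), f z := by
        rw [sum_image]
        intro x _ y _ hxy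
        simpa using hxy
      rw [h2]
      refine hf.transfer _ _ fun t => ?_
      have h3 : {b ∈ B | b - t ∈ Y.image (x + ·)} = {b ∈ B | b - (t + x) ∈ Y} := by
        refine filter_congr fun b _ => ?_
        rw [mem_image]
        constructor
        · rintro ⟨y, hy, h⟩
          have : b - (t + x) = y := by
            rw [← sub_sub, ← h]; abel
          rwa [this]
        · intro h
          exact ⟨_, h, by abel⟩
      rw [h3]
      exact hM _
    calc (∑ d ∈ Y, walkStep A V f d) * #B ≤ (∑ d ∈ Y, corr V f d) * #B :=
          mul_le_mul_of_nonneg_right (sum_le_sum fun d _ => step_le_corr hf.nonneg d)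
            (Nat.cast_nonneg _)
      _ = ∑ x ∈ V, f x * ((∑ d ∈ Y, f (x + d)) * #B) := by
          simp only [corr]
          rw [sum_comm, sum_mul]
          refine sum_congr rfl fun x _ => ?_
          rw [← mul_sum, mul_assoc]
      _ ≤ ∑ x ∈ V, f x * M :=
          sum_le_sum fun x _ => mul_le_mul_of_nonneg_left (h1 x) (hf.nonneg x)
      _ = (∑ x ∈ V, f x) * M := by rw [sum_mul]
      _ ≤ M := mul_le_of_le_one_left hM0 hf.mass

lemma cor_le {A V : Finset G} {f : G → ℝ} (hA : A.Nonempty) (hV : ∀ x, x ∉ V → f x = 0) :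
    cor A V f ≤ (∑ x ∈ V, f x ^ 2) * #A := by
  have hApos : (0 : ℝ) < #A := by exact_mod_cast hA.card_pos
  have h1 : ∑ d ∈ V, pop A d ≤ #A := by
    refine le_of_mul_le_mul_right ?_ hApos
    rw [sum_mul]
    simp only [pop_mul_card hA]
    have := sum_card_bipartiteAbove_eq_sum_card_bipartiteBelow (s := A) (t := V)
        (fun a d => a + d ∈ A)
    simp only [bipartiteAbove, bipartiteBelow] at this
    norm_cast
    rw [← this, ← smul_eq_mul]
    refine sum_le_card_nsmul _ _ _ fun a _ => ?_
    refine card_le_card_of_injOn (fun d => a + d) ?_ (fun x _ y _ hxy => by simpa using hxy)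
    intro d hd
    exact (mem_filter.1 (mem_coe.1 hd)).2
  calc cor A V f ≤ ∑ d ∈ V, (∑ x ∈ V, f x ^ 2) * pop A d :=
        sum_le_sum fun d _ => mul_le_mul_of_nonneg_right (corr_le hV d) (pop_nonneg _ _)
    _ = (∑ x ∈ V, f x ^ 2) * ∑ d ∈ V, pop A d := by rw [mul_sum]
    _ ≤ _ := mul_le_mul_of_nonneg_left h1 (sum_nonneg fun _ _ => sq_nonneg _)

/-- Cauchy–Schwarz: if the pairs `(s, x)` with `s ∈ S` and `s - x ∈ A` carry much `f`-weight, then so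
do the triples `(s, x, y)` with `s - x, s - y ∈ A`, whence `y - x` is often a popular difference
of `A`. -/
lemma sq_le_cor {A V : Finset G} {f : G → ℝ} (hA : A.Nonempty) (h0 : ∀ x, 0 ≤ f x)
    (hAV : A - A ⊆ V) (S : Finset G) :
    (∑ s ∈ S, ∑ x ∈ V, f x * (if s - x ∈ A then 1 else 0)) ^ 2 ≤ #S * (cor A V f * #A) := by
  refine sq_sum_le_card_mul_sum_sq.trans (mul_le_mul_of_nonneg_left ?_ (Nat.cast_nonneg _))
  have h1 : ∑ s ∈ S, (∑ x ∈ V, f x * (if s - x ∈ A then 1 else 0)) ^ 2 =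
      ∑ x ∈ V, ∑ y ∈ V, f x * f y * #{s ∈ S | s - x ∈ A ∧ s - y ∈ A} := by
    simp only [sq, sum_mul_sum]
    rw [sum_comm]
    refine sum_congr rfl fun x _ => ?_
    rw [sum_comm]
    refine sum_congr rfl fun y _ => ?_
    rw [card_filter, Nat.cast_sum, mul_sum]
    refine sum_congr rfl fun s _ => ?_
    by_cases hx : s - x ∈ A <;> by_cases hy : s - y ∈ A <;> simp [hx, hy]
  rw [h1, cor, sum_mul]
  have h2 : ∀ x y, (#{s ∈ S | s - x ∈ A ∧ s - y ∈ A} : ℝ) ≤ pop A (y - x) * #A := by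
    intro x y
    rw [pop_mul_card hA]
    norm_cast
    refine card_le_card_of_injOn (fun s => s - y) ?_ (fun x _ y _ hxy => by simpa using hxy)
    intro s hs
    have hs' := (mem_filter.1 (mem_coe.1 hs)).2
    refine mem_coe.2 (mem_filter.2 ⟨hs'.2, ?_⟩)
    have : s - y + (y - x) = s - x := by abel
    rw [this]
    exact hs'.1
  have h3 : ∑ d ∈ V, corr V f d * pop A d * #A =
      ∑ x ∈ V, ∑ d ∈ V, f x * f (x + d) * (pop A d * #A) := by
    rw [sum_comm]
    refine sum_congr rfl fun d _ => ?_
    rw [corr, mul_assoc, sum_mul]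
  rw [h3]
  refine sum_le_sum fun x _ => ?_
  calc ∑ y ∈ V, f x * f y * #{s ∈ S | s - x ∈ A ∧ s - y ∈ A}
      ≤ ∑ y ∈ V, f x * f y * (pop A (y - x) * #A) :=
        sum_le_sum fun y _ => mul_le_mul_of_nonneg_left (h2 x y) (mul_nonneg (h0 _) (h0 _))
    _ = ∑ y ∈ V, (fun d => f x * f (x + d) * (pop A d * #A)) (-x + y) := by
        refine sum_congr rfl fun y _ => ?_
        have e1 : x + (y - x) = y := by abel
        have e2 : -x + y = y - x := by abel
        simp only [e2, e1]
    _ ≤ _ := by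
        refine sum_shift_le (h := fun d => f x * f (x + d) * (pop A d * #A))
          (fun d => ?_) (fun d hd => ?_) V (-x)
        · exact mul_nonneg (mul_nonneg (h0 _) (h0 _))
            (mul_nonneg (pop_nonneg _ _) (Nat.cast_nonneg _))
        · simp [pop_eq_zero fun h => hd (hAV h)]

lemma cor_nonneg {A V : Finset G} {f : G → ℝ} (h0 : ∀ x, 0 ≤ f x) : 0 ≤ cor A V f :=
  sum_nonneg fun d _ => mul_nonneg (corr_nonneg h0 d) (pop_nonneg _ _)

/-- Each step of the walk keeps a power of the correlation: the sixth power comes from the convexity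
of `t ↦ t ^ 3` and one application of Cauchy–Schwarz. -/
lemma cor_step {A B V : Finset G} {f : G → ℝ} (hA : A.Nonempty) (hf : Good B V f)
    (hAV : A - A ⊆ V) : cor A V f ^ 6 ≤ cor A V (walkStep A V f) := by
  have hApos : (0 : ℝ) < #A := by exact_mod_cast hA.card_pos
  have hc0 := cor_nonneg (A := A) (V := V) hf.nonneg
  set J := cor A V f with hJ
  have h1 : J ^ 3 ≤ ∑ d ∈ V, walkStep A V f d * pop A d := by
    -- the tangent line inequality `p ^ 3 ≥ 3 * J ^ 2 * p - 2 * J ^ 3`, in place of Hölder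
    have h2 : ∀ d ∈ V, corr V f d * pop A d * (3 * J ^ 2) - corr V f d * (2 * J ^ 3) ≤
        walkStep A V f d * pop A d := by
      intro d _
      have hp := pop_nonneg A d
      have h3 : 0 ≤ pop A d ^ 3 - 3 * J ^ 2 * pop A d + 2 * J ^ 3 := by
        have : pop A d ^ 3 - 3 * J ^ 2 * pop A d + 2 * J ^ 3
          = (pop A d - J) ^ 2 * (pop A d + 2 * J) := by ring
        rw [this]; positivity
      have := mul_nonneg (corr_nonneg (V := V) hf.nonneg d) h3
      unfold walkStep
      nlinarith
    have h3 := sum_le_sum h2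
    rw [sum_sub_distrib, ← sum_mul, ← sum_mul] at h3
    have h4 : (∑ d ∈ V, corr V f d) * (2 * J ^ 3) ≤ 2 * J ^ 3 :=
      mul_le_of_le_one_left (by positivity) (sum_corr_le hf.nonneg hf.supp hf.mass V)
    have h5 : (∑ d ∈ V, corr V f d * pop A d) = J := rfl
    rw [h5] at h3
    nlinarith
  have h2 : (∑ d ∈ V, walkStep A V f d * pop A d) * #A ≤
      ∑ s ∈ A, ∑ x ∈ V, walkStep A V f x * (if s - x ∈ A then 1 else 0) := by
    rw [sum_comm, sum_mul]
    refine sum_le_sum fun d _ => ?_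
    rw [← mul_sum, mul_assoc, pop_mul_card hA]
    refine mul_le_mul_of_nonneg_left ?_ (step_nonneg hf.nonneg d)
    rw [sum_boole]
    norm_cast
    refine card_le_card_of_injOn (fun a => a + d) ?_ (fun x _ y _ hxy => by simpa using hxy)
    intro a ha
    have ha' := mem_filter.1 (mem_coe.1 ha)
    exact mem_coe.2 (mem_filter.2 ⟨ha'.2, by simpa using ha'.1⟩)
  have h3 := sq_le_cor hA (hf.step hAV).nonneg hAV A
  have h4 : J ^ 3 * #A ≤ ∑ s ∈ A, ∑ x ∈ V, walkStep A V f x * (if s - x ∈ A then 1 else 0) :=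
    (mul_le_mul_of_nonneg_right h1 hApos.le).trans h2
  have h5 : (J ^ 3 * #A) ^ 2 ≤ #A * (cor A V (walkStep A V f) * #A) :=
    (pow_le_pow_left₀ (by positivity) h4 2).trans h3
  refine le_of_mul_le_mul_right ?_ (show (0 : ℝ) < #A ^ 2 by positivity)
  nlinarith

/-- The uniform probability weight on `B`. -/
noncomputable def unif (B : Finset G) (x : G) : ℝ := if x ∈ B then 1 / #B else 0

lemma good_unif {B V : Finset G} (hB : B.Nonempty) (hBV : B ⊆ V) : Good B V (unif B) := by
  have hBpos : (0 : ℝ) < #B := by exact_mod_cast hB.card_pos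
  have hsum : ∀ Y : Finset G, ∑ x ∈ Y, unif B x = #{b ∈ B | b ∈ Y} * (1 / #B) := by
    intro Y
    unfold unif
    rw [← sum_filter, sum_const, nsmul_eq_mul]
    congr 3
    ext x
    simp [and_comm]
  refine ⟨fun x => ?_, fun x hx => ?_, ?_, fun Y M hM => ?_⟩
  · unfold unif; split_ifs <;> positivity
  · unfold unif; rw [if_neg fun h => hx (hBV h)]
  · rw [hsum, mul_one_div]
    exact div_le_one_of_le₀ (by exact_mod_cast card_filter_le _ _) hBpos.le
  · rw [hsum]
    have := hM 0
    simp only [sub_zero] at this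
    rwa [mul_assoc, one_div_mul_cancel hBpos.ne', mul_one]

lemma sum_sq_unif {B V : Finset G} (hB : B.Nonempty) (hBV : B ⊆ V) :
    (∑ x ∈ V, unif B x ^ 2) * #B ≤ 1 := by
  have hBpos : (0 : ℝ) < #B := by exact_mod_cast hB.card_pos
  have hg := good_unif hB hBV
  refine le_trans (le_of_eq ?_) hg.mass
  rw [sum_mul]
  refine sum_congr rfl fun x _ => ?_
  unfold unif
  split_ifs
  · field_simp
  · simp

lemma cor_unif {A B V : Finset G} (hA : A.Nonempty) (hB : B.Nonempty) (hBV : B ⊆ V)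
    (hAV : A - A ⊆ V) (g : Finset (G × G)) (hg : g ⊆ A ×ˢ B) :
    (#g : ℝ) ^ 2 ≤ #(g.image fun p => p.1 + p.2) * (cor A V (unif B) * #A) * #B ^ 2 := by
  have hBpos : (0 : ℝ) < #B := by exact_mod_cast hB.card_pos
  set S := g.image fun p => p.1 + p.2 with hS
  have h1 : #g ≤ #((S ×ˢ B).filter fun q => q.1 - q.2 ∈ A) := by
    refine card_le_card_of_injOn (fun p => (p.1 + p.2, p.2)) ?_ ?_
    · intro p hp
      have hp' := mem_product.1 (hg hp)
      refine mem_coe.2 (mem_filter.2 ⟨mem_product.2 ⟨?_, hp'.2⟩, ?_⟩)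
      · exact mem_image_of_mem _ hp
      · simpa using hp'.1
    · intro p _ q _ hpq
      simp only [Prod.mk.injEq] at hpq
      obtain ⟨e1, e2⟩ := hpq
      rw [e2] at e1
      exact Prod.ext (by simpa using e1) e2
  have h2 : (#((S ×ˢ B).filter fun q => q.1 - q.2 ∈ A) : ℝ) =
      (∑ s ∈ S, ∑ x ∈ V, unif B x * (if s - x ∈ A then 1 else 0)) * #B := by
    rw [card_filter, sum_product, Nat.cast_sum, sum_mul]
    refine sum_congr rfl fun s _ => ?_
    rw [sum_mul, Nat.cast_sum]
    rw [← sum_subset hBV (f := fun x => unif B x * (if s - x ∈ A then 1 else 0) * (#B : ℝ))]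
    · refine sum_congr rfl fun x hx => ?_
      unfold unif
      rw [if_pos hx]
      split_ifs <;> simp [hBpos.ne']
    · intro x _ hx
      simp [unif, hx]
  have h3 := sq_le_cor hA (good_unif hB hBV).nonneg hAV S
  have h4 : (#g : ℝ) ≤ (∑ s ∈ S, ∑ x ∈ V, unif B x * (if s - x ∈ A then 1 else 0)) * #B := by
    rw [← h2]; exact_mod_cast h1
  calc (#g : ℝ) ^ 2 ≤ _ := pow_le_pow_left₀ (by positivity) h4 2
    _ = (∑ s ∈ S, ∑ x ∈ V, unif B x * (if s - x ∈ A then 1 else 0)) ^ 2 * #B ^ 2 := by ring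
    _ ≤ _ := mul_le_mul_of_nonneg_right h3 (by positivity)

/-- The form of the theorem with all parameters explicit; `κ` plays the role of a small negative
power of `L`, and `τ` that of the initial correlation of `A` with its translates along `B - B`. -/
lemma main_aux {A B : Finset G} {g : Finset (G × G)} {L κ τ : ℝ} {k : ℕ}
    (hA : A.Nonempty) (hB : B.Nonempty) (hg : g ⊆ A ×ˢ B) (hκ : 0 < κ) (hκ' : κ ≤ 1 / 12)
    (hτ : 0 < τ) (hAB : (#A : ℝ) ≤ L * #B)
    (hG : τ * (#(g.image fun p => p.1 + p.2) * #A * #B ^ 2) ≤ (#g : ℝ) ^ 2)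
    (hS : (0 : ℝ) < #(g.image fun p => p.1 + p.2))
    (hk : L * (2 * κ) ^ k < τ ^ 36 ^ k) :
    ∃ A' B' : Finset G, A' ⊆ A ∧ B' ⊆ B ∧ κ / 2 * #A ≤ #A' ∧ κ / 8 * #B ≤ #B' ∧
      (#(A' + B') : ℝ) ≤ 147456 / κ ^ 11 * #A' := by
  have hApos : (0 : ℝ) < #A := by exact_mod_cast hA.card_pos
  have hBpos : (0 : ℝ) < #B := by exact_mod_cast hB.card_pos
  set V : Finset G := (A - A) ∪ B with hVdef
  have hAV : A - A ⊆ V := subset_union_left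
  have hBV : B ⊆ V := subset_union_right
  set F : ℕ → G → ℝ := fun j => (walkStep A V)^[j] (unif B) with hF
  have hFs : ∀ j, F (j + 1) = walkStep A V (F j) := fun j => Function.iterate_succ_apply' _ _ _
  have hgood : ∀ j, Good B V (F j) := by
    intro j
    induction j with
    | zero => exact good_unif hB hBV
    | succ j ih => rw [hFs]; exact ih.step hAV
  have hcor0 : τ ≤ cor A V (F 0) := by
    have h1 := hG.trans (cor_unif hA hB hBV hAV g hg)
    refine le_of_mul_le_mul_right ?_
      (show (0 : ℝ) < #(g.image fun p => p.1 + p.2) * #A * #B ^ 2 by positivity)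
    change _ ≤ cor A V (unif B) * _
    linarith
  have hcor : ∀ j, τ ^ 6 ^ j ≤ cor A V (F j) := by
    intro j
    induction j with
    | zero => simpa using hcor0
    | succ j ih =>
      rw [pow_succ, pow_mul, hFs]
      exact (pow_le_pow_left₀ (by positivity) ih 6).trans (cor_step hA (hgood j) hAV)
  set N : ℕ → ℝ := fun j => ∑ x ∈ V, F j x ^ 2 with hN
  have hNlow : ∀ j, τ ^ 6 ^ j ≤ N j * #A := fun j => (hcor j).trans (cor_le hA (hgood j).supp)
  have hNpos : ∀ j, 0 < N j := fun j =>
    pos_of_mul_pos_left ((by positivity : 0 < τ ^ 6 ^ j).trans_le (hNlow j)) hApos.le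
  have hN0 : N 0 * #A ≤ L := by
    have h1 : N 0 * #B ≤ 1 := sum_sq_unif hB hBV
    have h2 : 0 ≤ L := by
      by_contra h
      nlinarith
    have h3 := mul_le_mul_of_nonneg_left hAB (hNpos 0).le
    nlinarith
  -- the square sums cannot drop by the factor `2 * κ` at each of `k` consecutive double steps
  obtain ⟨j, hj⟩ : ∃ j, 2 * κ * N j ≤ N (j + 2) := by
    by_contra hcon
    push Not at hcon
    have h1 : ∀ i, N (2 * i) ≤ (2 * κ) ^ i * N 0 := by
      intro i
      induction i with
      | zero => simp
      | succ i ih =>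
        have h2 := (hcon (2 * i)).le
        have h3 := mul_le_mul_of_nonneg_left ih (show 0 ≤ 2 * κ by positivity)
        rw [pow_succ]
        have : 2 * (i + 1) = 2 * i + 2 := by ring
        rw [this]
        linarith
    have h2 := hNlow (2 * k)
    rw [pow_mul] at h2
    norm_num at h2
    have h3 := mul_le_mul_of_nonneg_right (h1 k) hApos.le
    have h4 : (2 * κ) ^ k * (N 0 * #A) ≤ (2 * κ) ^ k * L :=
      mul_le_mul_of_nonneg_left hN0 (by positivity)
    linarith
  have hgj := hgood j
  have hgj' := hgood (j + 1)
  refine finish (f := F (j + 1)) (N := N j) (V := V) hA hB (hNpos j) hκ hgj'.nonneg ?_ hgj'.supp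
    hgj'.mass ?_ ?_ hgj'.transfer
  · intro x
    rw [hFs]
    exact (step_le_corr hgj.nonneg x).trans (corr_le hgj.supp x)
  · refine hj.trans (sum_le_sum fun d _ => ?_)
    rw [hFs (j + 1)]
    exact pow_le_pow_left₀ (step_nonneg hgj'.nonneg d) (step_le_corr hgj'.nonneg d) 2
  · calc ∑ x ∈ V with pop A x < κ, F (j + 1) x
        ≤ ∑ x ∈ V with pop A x < κ, corr V (F j) x * κ ^ 2 := by
          refine sum_le_sum fun x hx => ?_
          rw [hFs]
          exact mul_le_mul_of_nonneg_left (pow_le_pow_left₀ (pop_nonneg _ _)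
            (mem_filter.1 hx).2.le 2) (corr_nonneg hgj.nonneg x)
      _ = (∑ x ∈ V with pop A x < κ, corr V (F j) x) * κ ^ 2 := by rw [sum_mul]
      _ ≤ κ ^ 2 := mul_le_of_le_one_left (by positivity)
          (sum_corr_le hgj.nonneg hgj.supp hgj.mass _)
      _ ≤ κ / 12 := by nlinarith

end Walk

/-- an asymmetric Balog–Szemerédi–Gowers theorem. -/
theorem stmt14 :
    ∀ ε : ℝ, 0 < ε → ∃ δ : ℝ, 0 < δ ∧ ∃ L0 : ℝ, ∀ L : ℝ, L0 ≤ L →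
      ∀ (G : Type) [AddCommGroup G] [DecidableEq G],
        ∀ (A B : Finset G) (g : Finset (G × G)),
          g ⊆ A ×ˢ B →
          (A.card : ℝ) ≤ L * (B.card : ℝ) →
          L ^ (-δ) * (A.card : ℝ) * (B.card : ℝ) ≤ (g.card : ℝ) →
          ((g.image fun p => p.1 + p.2).card : ℝ) ≤ L ^ δ * (A.card : ℝ) →
          ∃ A' B' : Finset G, A' ⊆ A ∧ B' ⊆ B ∧
            L ^ (-ε) * (A.card : ℝ) ≤ (A'.card : ℝ) ∧
            L ^ (-ε) * (B.card : ℝ) ≤ (B'.card : ℝ) ∧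
            ((A' + B').card : ℝ) ≤ L ^ ε * (A'.card : ℝ) := by
  intro ε hε
  -- With `l = L ^ θ`, the choice of `k` makes `l ^ k > L ^ 2`, and `δ` is so small that
  -- `2 * k` steps of the walk keep a correlation of at least `L ^ (-1)`.
  set θ : ℝ := ε / 24 with hθ
  have hθpos : 0 < θ := by positivity
  obtain ⟨k, hk⟩ := exists_nat_gt (2 / θ)
  have hkθ : 2 < θ * k := by rwa [div_lt_iff₀' hθpos] at hk
  set δ : ℝ := 1 / (3 * 36 ^ k) with hδ
  have hδpos : 0 < δ := by positivity
  refine ⟨δ, hδpos, max 1 (512 ^ (1 / θ)), ?_⟩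
  intro L hL G _ _ A B g hg hAB hgc hSc
  have hL1 : 1 ≤ L := (le_max_left _ _).trans hL
  have hL0 : 0 < L := by linarith
  set l : ℝ := L ^ θ with hl
  have hl512 : 512 ≤ l := by
    have h1 : (512 : ℝ) ^ (1 / θ) ≤ L := (le_max_right _ _).trans hL
    have h2 := Real.rpow_le_rpow (by positivity) h1 hθpos.le
    rwa [← Real.rpow_mul (by norm_num), one_div_mul_cancel hθpos.ne', Real.rpow_one] at h2
  have hlpos : 0 < l := by linarith
  have hlε : L ^ ε = l ^ 24 := by
    rw [hl, ← Real.rpow_natCast, ← Real.rpow_mul hL0.le, hθ]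
    congr 1
    push_cast
    ring
  have hlε' : L ^ (-ε) = (l ^ 24)⁻¹ := by rw [Real.rpow_neg hL0.le, hlε]
  rcases A.eq_empty_or_nonempty with rfl | hA
  · refine ⟨∅, B, Subset.rfl, Subset.rfl, by simp, ?_, by simp⟩
    refine mul_le_of_le_one_left (Nat.cast_nonneg _) ?_
    rw [hlε']
    exact inv_le_one_of_one_le₀ (one_le_pow₀ (by linarith))
  have hApos : (0 : ℝ) < #A := by exact_mod_cast hA.card_pos
  have hB : B.Nonempty := by
    rw [nonempty_iff_ne_empty]
    rintro rfl
    simp at hAB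
    exact hA.ne_empty hAB
  have hBpos : (0 : ℝ) < #B := by exact_mod_cast hB.card_pos
  have hgpos : (0 : ℝ) < #g := lt_of_lt_of_le (by positivity) hgc
  have hgne : g.Nonempty := by
    rw [← card_pos]; exact_mod_cast hgpos
  have hSpos : (0 : ℝ) < #(g.image fun p => p.1 + p.2) := by
    exact_mod_cast (hgne.image _).card_pos
  set κ : ℝ := 1 / (2 * l) with hκ
  have hκpos : 0 < κ := by positivity
  have hκl : 2 * κ = l⁻¹ := by rw [hκ]; field_simp
  have c1 : κ ≤ 1 / 12 := by
    rw [hκ]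
    exact one_div_le_one_div_of_le (by norm_num) (by linarith)
  have c2 : L ^ (-(3 * δ)) * (#(g.image fun p => p.1 + p.2) * #A * #B ^ 2) ≤ (#g : ℝ) ^ 2 := by
    have e1 : L ^ (-(3 * δ)) * L ^ δ = L ^ (-δ) * L ^ (-δ) := by
      rw [← Real.rpow_add hL0, ← Real.rpow_add hL0]
      congr 1
      ring
    calc L ^ (-(3 * δ)) * (#(g.image fun p => p.1 + p.2) * #A * #B ^ 2)
        ≤ L ^ (-(3 * δ)) * ((L ^ δ * #A) * #A * #B ^ 2) := by gcongr
      _ = (L ^ (-(3 * δ)) * L ^ δ) * (#A * #A * #B ^ 2) := by ring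
      _ = (L ^ (-δ) * #A * #B) ^ 2 := by rw [e1]; ring
      _ ≤ (#g : ℝ) ^ 2 := pow_le_pow_left₀ (by positivity) hgc 2
  have c3 : L * (2 * κ) ^ k < (L ^ (-(3 * δ))) ^ 36 ^ k := by
    have hLgt : 1 < L := by
      by_contra h
      have : L = 1 := le_antisymm (not_lt.1 h) hL1
      rw [hl, this, Real.one_rpow] at hl512
      norm_num at hl512
    have e1 : (L ^ (-(3 * δ))) ^ 36 ^ k = L ^ (-1 : ℝ) := by
      rw [← Real.rpow_natCast, ← Real.rpow_mul hL0.le, hδ]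
      congr 1
      push_cast
      field_simp
    have e2 : L * (2 * κ) ^ k = L ^ (1 - θ * k) := by
      rw [hκl, hl, inv_pow, ← Real.rpow_natCast, ← Real.rpow_mul hL0.le, Real.rpow_sub hL0,
        Real.rpow_one, div_eq_mul_inv]
    rw [e1, e2]
    exact Real.rpow_lt_rpow_of_exponent_lt hLgt (by linarith)
  obtain ⟨A', B', hA', hB', h1, h2, h3⟩ :=
    main_aux hA hB hg hκpos c1 (by positivity) hAB c2 hSpos c3
  refine ⟨A', B', hA', hB', ?_, ?_, ?_⟩
  · refine le_trans (mul_le_mul_of_nonneg_right ?_ hApos.le) h1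
    rw [hlε', hκ, div_div, ← one_div]
    refine one_div_le_one_div_of_le (by positivity) ?_
    calc 2 * l * 2 = 4 * l := by ring
      _ ≤ l ^ 23 * l := by
        gcongr
        exact (by linarith : (4 : ℝ) ≤ l).trans (le_self_pow₀ (by linarith) (by norm_num))
      _ = l ^ 24 := by ring
  · refine le_trans (mul_le_mul_of_nonneg_right ?_ hBpos.le) h2
    rw [hlε', hκ, div_div, ← one_div]
    refine one_div_le_one_div_of_le (by positivity) ?_
    calc 2 * l * 8 = 16 * l := by ring
      _ ≤ l ^ 23 * l := by
        gcongr
        exact (by linarith : (16 : ℝ) ≤ l).trans (le_self_pow₀ (by linarith) (by norm_num))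
      _ = l ^ 24 := by ring
  · refine h3.trans (mul_le_mul_of_nonneg_right ?_ (Nat.cast_nonneg _))
    rw [hlε, hκ]
    calc 147456 / (1 / (2 * l)) ^ 11 = 147456 * 2 ^ 11 * l ^ 11 := by field_simp
      _ ≤ 512 ^ 13 * l ^ 11 := by gcongr; norm_num
      _ ≤ l ^ 13 * l ^ 11 := by gcongr
      _ = l ^ 24 := by ring
end

section
/- Let 0 < τ < 1, γ > 0 and l ∈ ℕ be given. Then there exists ε = ε(τ, γ, l) > 0 such that the following holds for all sufficiently large n. Let μ be a Borel probability measure on [0,1) and let A ⊂ [0,1) satisfy: for every x ∈ A, #{1 ≤ k ≤ n − l : μ(D_{k+l}(x)) ≤ τ·μ(D_k(x))} ≥ n(1 − γ/2). Then for any Borel set D ⊂ A satisfying, for every x ∈ D, #{1 ≤ k ≤ n − l : #{Q ∈ D_{k+l} : Q ⊂ D_k(x) and Q ∩ D ≠ ∅} = 1} ≥ nγ, one has μ(D) ≤ 2^{−nε}. -/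
/-!
Call `k` good for `x` if the mass drops by the factor `τ` from `dyadicCell k x` to
`dyadicCell (k + l) x` and `D` meets only one generation-`(k + l)` subinterval of `dyadicCell k x`.
Since the number of scales is at most `n`, the two hypotheses leave at least `n * γ / 2` good
scales for each point of `D`.

Along an arithmetic progression of scales `k, k + l, k + 2 * l, ...`, the points of `D` in a
generation-`k` dyadic interval `Q` having at least `t` good scales form a set of measure at most
`τ ^ t * μ Q` (`measure_good_le`). This goes by induction on the length of the progression. If `k`
is good for some point of `D ∩ Q`, all of `D ∩ Q` lies in a single subinterval, whose mass is at
most `τ * μ Q`; otherwise no good scale is used up and the bounds on the subintervals of `Q` add up.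

By pigeonhole, each point of `D` has at least (rounded down) `n * γ / (2 * (l + 1))` good scales in one such
progression (`exists_progression`), and at most `n + l + 1` starting points are needed, so
`μ D ≤ (n + l + 1) * τ ^ (n * γ / (2 * (l + 1)))` up to rounding the exponent down, which is
exponentially small.
-/

open MeasureTheory Set
open scoped Classical

noncomputable section

/-- The dyadic interval of generation `k` with index `j`. -/
def dyI (k : ℕ) (j : ℤ) : Set ℝ := Set.Ico ((j : ℝ) / 2 ^ k) (((j : ℝ) + 1) / 2 ^ k)

/-- The dyadic interval of generation `k` containing `x`. -/
def dyadicCell (k : ℕ) (x : ℝ) : Set ℝ := dyI k ⌊(2 : ℝ) ^ k * x⌋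

/-- The number of dyadic intervals `Q` of generation `k + l` contained in the generation-`k`
dyadic interval of `x` that intersect `D`. -/
def subcellHitCount (D : Set ℝ) (k l : ℕ) (x : ℝ) : ℕ :=
  ((Finset.Ico ((2 ^ l : ℤ) * ⌊(2 : ℝ) ^ k * x⌋)
      ((2 ^ l : ℤ) * ⌊(2 : ℝ) ^ k * x⌋ + 2 ^ l)).filter
    fun j => (dyI (k + l) j ∩ D).Nonempty).card

/-- The scale `k` is good for `x`: the mass drops by the factor `τ` between generations `k` and
`k + l` at `x`, and `D` meets exactly one generation-`(k + l)` subinterval of `dyadicCell k x`. -/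
def GoodScale (μ : Measure ℝ) (τ : ℝ) (l : ℕ) (D : Set ℝ) (k : ℕ) (x : ℝ) : Prop :=
  μ (dyadicCell (k + l) x) ≤ ENNReal.ofReal τ * μ (dyadicCell k x) ∧ subcellHitCount D k l x = 1

/-- The points of `D ∩ dyI k j` with at least `t` good scales among the first `m` terms of
`k, k + l, k + 2 * l, ...`. -/
def goodSet (μ : Measure ℝ) (τ : ℝ) (l : ℕ) (D : Set ℝ) (m k : ℕ) (j : ℤ) (t : ℕ) : Set ℝ :=
  {x | x ∈ D ∧ x ∈ dyI k j ∧
    t ≤ ((Finset.range m).filter fun i => GoodScale μ τ l D (k + i * l) x).card}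

lemma mem_dyI_iff (k : ℕ) (j : ℤ) (x : ℝ) : x ∈ dyI k j ↔ ⌊(2 : ℝ) ^ k * x⌋ = j := by
  have h : (0 : ℝ) < 2 ^ k := by positivity
  rw [Int.floor_eq_iff, dyI, Set.mem_Ico, div_le_iff₀ h, lt_div_iff₀ h, mul_comm x]

lemma mem_dyI_iff_sub (k l : ℕ) (j : ℤ) (x : ℝ) : x ∈ dyI k j ↔
    ⌊(2 : ℝ) ^ (k + l) * x⌋ ∈ Finset.Ico ((2 ^ l : ℤ) * j) ((2 ^ l : ℤ) * j + 2 ^ l) := by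
  have h : (0 : ℝ) < 2 ^ l := by positivity
  rw [mem_dyI_iff, Int.floor_eq_iff, Finset.mem_Ico, Int.le_floor, Int.floor_lt]
  have e1 : (2 : ℝ) ^ (k + l) * x = 2 ^ l * (2 ^ k * x) := by ring
  push_cast
  have e2 : (2 : ℝ) ^ l * j + 2 ^ l = 2 ^ l * (j + 1) := by ring
  rw [e1, e2, mul_le_mul_iff_right₀ h, mul_lt_mul_iff_right₀ h]

lemma measure_dyI_eq_sum (μ : Measure ℝ) (k l : ℕ) (j : ℤ) :
    ∑ i ∈ Finset.Ico ((2 ^ l : ℤ) * j) ((2 ^ l : ℤ) * j + 2 ^ l), μ (dyI (k + l) i)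
      = μ (dyI k j) := by
  rw [← measure_biUnion_finset]
  · congr 1
    ext x
    simp only [Set.mem_iUnion, mem_dyI_iff_sub k l j x, mem_dyI_iff (k + l)]
    simp
  · intro a _ b _ hab
    refine Set.disjoint_left.2 fun x hx hx' => hab ?_
    rw [mem_dyI_iff] at hx hx'
    exact hx.symm.trans hx'
  · intro i _
    exact measurableSet_Ico

/-- Bounds relative to the mass of the generation-`(k + l)` subintervals add up to a bound relative
to the mass of `dyI k j`. -/
lemma measure_le_of_sub (μ : Measure ℝ) (k l : ℕ) (j : ℤ) (S : Set ℝ) (T : ℤ → Set ℝ)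
    (c : ENNReal) (hS : S ⊆ dyI k j) (hST : ∀ x ∈ S, x ∈ T ⌊(2 : ℝ) ^ (k + l) * x⌋)
    (hT : ∀ i, μ (T i) ≤ c * μ (dyI (k + l) i)) : μ S ≤ c * μ (dyI k j) := by
  calc μ S ≤ μ (⋃ i ∈ Finset.Ico ((2 ^ l : ℤ) * j) ((2 ^ l : ℤ) * j + 2 ^ l), T i) := by
        refine measure_mono fun x hx => ?_
        simp only [Set.mem_iUnion]
        exact ⟨_, (mem_dyI_iff_sub k l j x).1 (hS hx), hST x hx⟩
    _ ≤ ∑ i ∈ Finset.Ico ((2 ^ l : ℤ) * j) ((2 ^ l : ℤ) * j + 2 ^ l), μ (T i) :=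
        measure_biUnion_finset_le _ _
    _ ≤ ∑ i ∈ Finset.Ico ((2 ^ l : ℤ) * j) ((2 ^ l : ℤ) * j + 2 ^ l),
          c * μ (dyI (k + l) i) := Finset.sum_le_sum fun i _ => hT i
    _ = c * μ (dyI k j) := by rw [← Finset.mul_sum, measure_dyI_eq_sum]

/-- Splitting off the first term of the progression of scales. -/
lemma card_good_succ (P : ℕ → Prop) (m k l : ℕ) :
    ((Finset.range (m + 1)).filter fun i => P (k + i * l)).card =
      ((Finset.range m).filter fun i => P (k + l + i * l)).card + if P k then 1 else 0 := by
  simp only [Finset.card_filter]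
  rw [Finset.sum_range_succ']
  simp [add_mul, add_assoc, add_comm l]

/-- When `D` meets only one subinterval of `dyadicCell k x`, all points of `D` in that cell lie in
the same subinterval. -/
lemma floor_eq_of_hitCount {D : Set ℝ} {k l : ℕ} {x y : ℝ} {j : ℤ} (hx : x ∈ D) (hy : y ∈ D)
    (hxj : x ∈ dyI k j) (hyj : y ∈ dyI k j) (h : subcellHitCount D k l x = 1) :
    ⌊(2 : ℝ) ^ (k + l) * y⌋ = ⌊(2 : ℝ) ^ (k + l) * x⌋ := by
  unfold subcellHitCount at h
  rw [(mem_dyI_iff k j x).1 hxj, Finset.card_eq_one] at h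
  obtain ⟨a, ha⟩ := h
  have key : ∀ z ∈ D, z ∈ dyI k j → ⌊(2 : ℝ) ^ (k + l) * z⌋ = a := by
    intro z hz hzj
    rw [← Finset.mem_singleton, ← ha, Finset.mem_filter]
    exact ⟨(mem_dyI_iff_sub k l j z).1 hzj, z, (mem_dyI_iff _ _ _).2 rfl, hz⟩
  rw [key y hy hyj, key x hx hxj]

/-- The main estimate: each good scale costs a factor `τ` in measure. -/
lemma measure_good_le (μ : Measure ℝ) (τ : ℝ) (l : ℕ) (D : Set ℝ) (m : ℕ) :
    ∀ (k : ℕ) (j : ℤ) (t : ℕ),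
      μ (goodSet μ τ l D m k j t) ≤ ENNReal.ofReal τ ^ t * μ (dyI k j) := by
  induction m with
  | zero =>
    intro k j t
    rcases t with _ | t
    · simpa using measure_mono fun x hx => hx.2.1
    · have : goodSet μ τ l D 0 k j (t + 1) = ∅ := by
        ext x
        simp [goodSet]
      simp [this]
  | succ m ih =>
    intro k j t
    by_cases hg : ∃ x ∈ D, x ∈ dyI k j ∧ GoodScale μ τ l D k x
    · obtain ⟨x, hxD, hxj, hdrop, hone⟩ := hg
      rcases t with _ | t
      · simpa using measure_mono fun x hx => hx.2.1
      calc μ (goodSet μ τ l D (m + 1) k j (t + 1))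
          ≤ μ (goodSet μ τ l D m (k + l) ⌊(2 : ℝ) ^ (k + l) * x⌋ t) := by
            refine measure_mono fun y hy => ?_
            obtain ⟨hyD, hyj, hyt⟩ := hy
            refine ⟨hyD, ?_, ?_⟩
            · rw [mem_dyI_iff]
              exact floor_eq_of_hitCount hxD hyD hxj hyj hone
            · rw [card_good_succ (fun k => GoodScale μ τ l D k y)] at hyt
              split_ifs at hyt <;> omega
        _ ≤ ENNReal.ofReal τ ^ t * μ (dyadicCell (k + l) x) := ih _ _ _
        _ ≤ ENNReal.ofReal τ ^ t * (ENNReal.ofReal τ * μ (dyadicCell k x)) := by gcongr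
        _ = ENNReal.ofReal τ ^ (t + 1) * μ (dyI k j) := by
            rw [dyadicCell, (mem_dyI_iff k j x).1 hxj, pow_succ, mul_assoc]
    · refine measure_le_of_sub μ k l j _ (fun i => goodSet μ τ l D m (k + l) i t) _
        (fun x hx => hx.2.1) ?_ (fun i => ih _ _ _)
      rintro y ⟨hyD, hyj, hyt⟩
      refine ⟨hyD, (mem_dyI_iff _ _ _).2 rfl, ?_⟩
      rw [card_good_succ (fun k => GoodScale μ τ l D k y),
        if_neg fun h => hg ⟨y, hyD, hyj, h⟩] at hyt
      simpa using hyt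

/-- Pigeonhole over residues mod `l`. When `l = 0` the progression is constant, and starting it at
any element of `G` gives `n` good terms. -/
lemma exists_progression (P : ℕ → Prop) (n l t : ℕ) (G : Finset ℕ)
    (hG : ∀ k ∈ G, k ≤ n - l ∧ 1 ≤ k ∧ P k) (ht : (l + 1) * t ≤ G.card) (h0 : 0 < G.card) :
    ∃ r ∈ Finset.range (n + l + 1),
      t ≤ ((Finset.range n).filter fun i => P (r + i * l)).card := by
  rcases Nat.eq_zero_or_pos l with rfl | hl
  · obtain ⟨k, hk⟩ := Finset.card_pos.1 h0
    obtain ⟨h1, h2, h3⟩ := hG k hk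
    refine ⟨k, Finset.mem_range.2 (by omega), ?_⟩
    have : G ⊆ Finset.Icc 1 n := fun a ha => by
      have := hG a ha
      exact Finset.mem_Icc.2 ⟨this.2.1, by omega⟩
    have := Finset.card_le_card this
    simp [h3] at this ⊢
    omega
  · obtain ⟨r, hr, hc⟩ := Finset.exists_le_card_fiber_of_mul_le_card_of_maps_to
      (s := G) (t := Finset.range l) (f := fun k => k % l) (n := t)
      (fun k _ => Finset.mem_range.2 (Nat.mod_lt _ hl)) ⟨0, Finset.mem_range.2 hl⟩
      (by rw [Finset.card_range]; nlinarith)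
    have hr' := Finset.mem_range.1 hr
    refine ⟨r, Finset.mem_range.2 (by omega), hc.trans ?_⟩
    refine Finset.card_le_card_of_injOn (fun k => k / l) ?_ ?_
    · intro k hk
      simp only [Finset.coe_filter, Set.mem_ofPred_eq, Finset.mem_range] at hk ⊢
      obtain ⟨h1, h2, h3⟩ := hG k hk.1
      have e : r + k / l * l = k := by
        rw [← hk.2, mul_comm]
        exact Nat.mod_add_div k l
      refine ⟨?_, by rwa [e]⟩
      have := Nat.div_le_self k l
      omega
    · intro a ha b hb hab
      simp only [Finset.coe_filter, Set.mem_ofPred_eq] at ha hb hab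
      rw [← Nat.mod_add_div a l, ← Nat.mod_add_div b l, ha.2, hb.2, hab]

lemma measure_le_card_mul (μ : Measure ℝ) (hμ : μ (Set.Ico (0 : ℝ) 1) = 1) (τ : ℝ) (l n t : ℕ)
    (D : Set ℝ) (hD : D ⊆ Set.Ico (0 : ℝ) 1)
    (h : ∀ x ∈ D, ∃ r ∈ Finset.range (n + l + 1),
      t ≤ ((Finset.range n).filter fun i => GoodScale μ τ l D (r + i * l) x).card) :
    μ D ≤ (n + l + 1 : ℕ) * ENNReal.ofReal τ ^ t := by
  have hdy : dyI 0 0 = Set.Ico (0 : ℝ) 1 := by simp [dyI]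
  let S : ℕ → Set ℝ := fun r => {x | x ∈ D ∧
    t ≤ ((Finset.range n).filter fun i => GoodScale μ τ l D (r + i * l) x).card}
  have hS : ∀ r, μ (S r) ≤ ENNReal.ofReal τ ^ t := by
    intro r
    have := measure_le_of_sub μ 0 r 0 (S r) (fun i => goodSet μ τ l D n (0 + r) i t)
      (ENNReal.ofReal τ ^ t) (fun x hx => hdy ▸ hD hx.1)
      (fun x hx => ⟨hx.1, (mem_dyI_iff _ _ _).2 rfl, by simpa using hx.2⟩)
      (fun i => measure_good_le _ _ _ _ _ _ _ _)
    rwa [hdy, hμ, mul_one] at this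
  calc μ D ≤ μ (⋃ r ∈ Finset.range (n + l + 1), S r) := by
        refine measure_mono fun x hx => ?_
        obtain ⟨r, hr, hx'⟩ := h x hx
        simp only [Set.mem_iUnion]
        exact ⟨r, hr, hx, hx'⟩
    _ ≤ ∑ r ∈ Finset.range (n + l + 1), μ (S r) := measure_biUnion_finset_le _ _
    _ ≤ ∑ r ∈ Finset.range (n + l + 1), ENNReal.ofReal τ ^ t := Finset.sum_le_sum fun r _ => hS r
    _ = _ := by simp

/-- The rounding from `c * n` to a natural number of good scales and the factor `n + l + 1` are
absorbed by halving the exponent. -/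
lemma eventually_bound (τ c : ℝ) (l : ℕ) (hτ0 : 0 < τ) (hτ1 : τ < 1) (hc : 0 < c) :
    ∃ N : ℕ, ∀ n : ℕ, N ≤ n → ∀ t : ℕ, c * n - 1 ≤ t →
      ((n + l + 1 : ℕ) : ℝ) * τ ^ t ≤ τ ^ (c / 2 * n) := by
  set q : ℝ := τ ^ (c / 2) with hq
  have hq0 : 0 < q := by positivity
  have hq1 : q < 1 := Real.rpow_lt_one hτ0.le hτ1 (by positivity)
  have h1 : Filter.Tendsto (fun n : ℕ => (n : ℝ) * q ^ n + (l + 1) * q ^ n) Filter.atTop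
      (nhds (0 + (l + 1) * 0)) :=
    (tendsto_self_mul_const_pow_of_lt_one hq0.le hq1).add
      ((tendsto_pow_atTop_nhds_zero_of_lt_one hq0.le hq1).const_mul _)
  have h2 := h1.eventually (ge_mem_nhds (show 0 + ((l : ℝ) + 1) * 0 < τ by simpa using hτ0))
  obtain ⟨N, hN⟩ := Filter.eventually_atTop.1 h2
  refine ⟨N, fun n hn t ht => ?_⟩
  have hqn : τ ^ (c / 2 * n) = q ^ n := by rw [hq, ← Real.rpow_mul_natCast hτ0.le]
  have htt : τ ^ t ≤ q ^ n * q ^ n / τ := by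
    rw [← hqn, ← Real.rpow_add hτ0, ← Real.rpow_natCast]
    calc τ ^ (t : ℝ) ≤ τ ^ (c / 2 * n + c / 2 * n - 1) :=
          Real.rpow_le_rpow_of_exponent_ge hτ0 hτ1.le (by linarith)
      _ = _ := by rw [Real.rpow_sub hτ0, Real.rpow_one]
  have hNn := hN n hn
  rw [hqn]
  push_cast
  calc ((n : ℝ) + l + 1) * τ ^ t ≤ ((n : ℝ) + l + 1) * (q ^ n * q ^ n / τ) := by gcongr
    _ = ((n : ℝ) * q ^ n + (l + 1) * q ^ n) / τ * q ^ n := by ring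
    _ ≤ 1 * q ^ n := by
        gcongr
        rw [div_le_one hτ0]
        exact hNn
    _ = q ^ n := one_mul _

/-- Two sets of scales in `Icc 1 (n - l)`, of sizes at least `n * (1 - γ / 2)` and `n * γ`, overlap in at
least `n * γ / 2` scales. -/
lemma card_filter_and (n l : ℕ) (γ : ℝ) (P Q R : ℕ → Prop)
    [DecidablePred P] [DecidablePred Q] [DecidablePred R] (hR : ∀ k, R k ↔ P k ∧ Q k)
    (hP : (n : ℝ) * (1 - γ / 2) ≤ (((Finset.Icc 1 (n - l)).filter P).card : ℝ))
    (hQ : (n : ℝ) * γ ≤ (((Finset.Icc 1 (n - l)).filter Q).card : ℝ)) :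
    (n : ℝ) * (γ / 2) ≤ (((Finset.Icc 1 (n - l)).filter R).card : ℝ) := by
  have h1 := Finset.card_union_add_card_inter
    ((Finset.Icc 1 (n - l)).filter P) ((Finset.Icc 1 (n - l)).filter Q)
  have hinter : (Finset.Icc 1 (n - l)).filter P ∩ (Finset.Icc 1 (n - l)).filter Q =
      (Finset.Icc 1 (n - l)).filter R := by
    ext k
    rw [Finset.mem_inter, Finset.mem_filter, Finset.mem_filter, Finset.mem_filter, hR]
    tauto
  rw [hinter] at h1
  have h2 : ((Finset.Icc 1 (n - l)).filter P ∪ (Finset.Icc 1 (n - l)).filter Q).card ≤ n := by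
    refine (Finset.card_le_card (Finset.union_subset (Finset.filter_subset _ _)
      (Finset.filter_subset _ _))).trans ?_
    simp
  have h3 : (((Finset.Icc 1 (n - l)).filter P).card : ℝ) +
      ((Finset.Icc 1 (n - l)).filter Q).card ≤
      n + ((Finset.Icc 1 (n - l)).filter R).card := by
    exact_mod_cast (by omega)
  linarith

/-- a porosity-type estimate. -/
theorem stmt16 (τ γ : ℝ) (l : ℕ) (hτ0 : 0 < τ) (hτ1 : τ < 1) (hγ : 0 < γ) :
    ∃ ε : ℝ, 0 < ε ∧ ∃ N : ℕ, ∀ n : ℕ, N ≤ n →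
      ∀ μ : Measure ℝ, IsProbabilityMeasure μ → μ (Set.Ico (0 : ℝ) 1) = 1 →
      ∀ A : Set ℝ, A ⊆ Set.Ico (0 : ℝ) 1 →
        (∀ x ∈ A,
          (n : ℝ) * (1 - γ / 2) ≤
            (((Finset.Icc 1 (n - l)).filter fun k =>
              μ (dyadicCell (k + l) x) ≤ ENNReal.ofReal τ * μ (dyadicCell k x)).card : ℝ)) →
      ∀ D : Set ℝ, D ⊆ A →
        (∀ x ∈ D,
          (n : ℝ) * γ ≤
            (((Finset.Icc 1 (n - l)).filter fun k => subcellHitCount D k l x = 1).card : ℝ)) →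
        μ D ≤ ENNReal.ofReal ((2 : ℝ) ^ (-(n : ℝ) * ε)) := by
  set c : ℝ := γ / 2 / (l + 1) with hc
  have hc0 : 0 < c := by positivity
  obtain ⟨N, hN⟩ := eventually_bound τ c l hτ0 hτ1 hc0
  have hlogτ : Real.log τ < 0 := Real.log_neg hτ0 hτ1
  have hlog2 : 0 < Real.log 2 := Real.log_pos one_lt_two
  -- `ε` is chosen so that `2 ^ (-n * ε) = τ ^ (c / 2 * n)`.
  refine ⟨c / 2 * (-Real.log τ / Real.log 2), by have := neg_pos.2 hlogτ; positivity,
    max N 1, fun n hn μ _ hμ A hA hdrop D hDA hone => ?_⟩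
  have hn1 : (1 : ℝ) ≤ n := by exact_mod_cast (le_max_right N 1).trans hn
  have hε : (2 : ℝ) ^ (-(n : ℝ) * (c / 2 * (-Real.log τ / Real.log 2))) = τ ^ (c / 2 * n) := by
    rw [Real.rpow_def_of_pos two_pos, Real.rpow_def_of_pos hτ0]
    congr 1
    field_simp
  have hmain : μ D ≤ (n + l + 1 : ℕ) * ENNReal.ofReal τ ^ ⌊c * n⌋₊ := by
    refine measure_le_card_mul μ hμ τ l n _ D (hDA.trans hA) fun x hx => ?_
    have hcard : (n : ℝ) * (γ / 2) ≤
        (((Finset.Icc 1 (n - l)).filter fun k => GoodScale μ τ l D k x).card : ℝ) :=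
      card_filter_and n l γ _ _ _ (fun _ => Iff.rfl) (hdrop x (hDA hx)) (hone x hx)
    refine exists_progression (fun k => GoodScale μ τ l D k x) n l _
      ((Finset.Icc 1 (n - l)).filter fun k => GoodScale μ τ l D k x) ?_ ?_ ?_
    · intro k hk
      rw [Finset.mem_filter, Finset.mem_Icc] at hk
      exact ⟨hk.1.2, hk.1.1, hk.2⟩
    · have hfl : (⌊c * n⌋₊ : ℝ) ≤ c * n := Nat.floor_le (by positivity)
      have hcl : ((l : ℝ) + 1) * (c * n) = n * (γ / 2) := by rw [hc]; field_simp
      have : ((l : ℝ) + 1) * ⌊c * n⌋₊ ≤ n * (γ / 2) := by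
        rw [← hcl]
        gcongr
      exact_mod_cast this.trans hcard
    · have : (0 : ℝ) < n * (γ / 2) := by positivity
      exact_mod_cast this.trans_le hcard
  refine hmain.trans ?_
  rw [hε, ← ENNReal.ofReal_pow hτ0.le, ← ENNReal.ofReal_natCast,
    ← ENNReal.ofReal_mul (by positivity)]
  refine ENNReal.ofReal_le_ofReal (hN n ((le_max_left _ _).trans hn) _ ?_)
  linarith [Nat.lt_floor_add_one (c * (n : ℝ))]

end
end

section
/- Let K ⊂ [0,1]² be the quarter four-corner Cantor set, i.e. the attractor of the IFS F = {(x,y) ↦ (x/4 + a/4, y/4 + b/4) : (a,b) ∈ {(0,0), (3,0), (0,3), (3,3)}}. Then dim_A K = 1 and the set {π ∈ G(2,1) : dim_A πK < min(1, dim_A K)} = {π ∈ G(2,1) : dim_A πK < 1} is dense in G(2,1). -/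
/-!
Upper bounds come from one covering lemma, `cover_of_digits`: if `M • L ⊆ L + A` with `A` a finite
subset of a discrete group, then every ball of radius about `M^{-k}` meets boundedly many level-`k`
cells of `L`, because their positions are points of that group in a ball of bounded radius. Hence
`dim_A L ≤ log |A| / log M`. For `K` itself, `M = |A| = 4` gives `dim_A K ≤ 1`.

The lower bound `dim_A K ≥ 1` holds because the Lipschitz map `(x, y) ↦ x + 2 y` sends `K` onto the
interval `[0, 3]`, its digits `0, 3, 6, 9` being three times a complete set of base-`4` digits.

For the projections, let `tan θ = P / Q`, where `P` and `Q` are integers with base-`4` digits in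
`{-1, 0, 1}`. Writing both as differences of numbers with `n` digits in `{0, 1}` exhibits two
level-`n` cells of `K` with the same projection in direction `θ`. The projection therefore
satisfies the covering lemma with `M = 4^n` and `|A| < 4^n`, the group being generated by
`cos θ / Q`, and so its dimension is less than `1` (`assouadDim_proj_lt`).

It remains to see that such ratios are dense. For `u ∈ [1/2, 2]`, digits of `P` and `Q` can be
chosen greedily so that `|P - u Q| ≤ (1 + u) / 3` persists while `Q` grows like `4^n`
(`greedy_digit`, `greedy_approx`). Every positive slope is a power of `4` times such a `u`, and
multiplying `P` or `Q` by powers of `4` preserves the digit condition.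
-/

open Set
open scoped ENNReal

noncomputable section

/-- The smallest number of sets of diameter at most `r` needed to cover `A`
(`⊤` if no finite cover exists). -/
def coverNumber {X : Type*} [PseudoMetricSpace X] (A : Set X) (r : ℝ) : ℝ≥0∞ :=
  ⨅ (S : Finset (Set X)) (_ : A ⊆ ⋃ s ∈ S, s)
    (_ : ∀ s ∈ S, EMetric.diam s ≤ ENNReal.ofReal r), (S.card : ℝ≥0∞)

/-- The Assouad dimension of a subset of a metric space. -/
def assouadDim {X : Type*} [PseudoMetricSpace X] (F : Set X) : ℝ :=
  sInf {s : ℝ | 0 ≤ s ∧ ∃ C : ℝ, 0 < C ∧ ∀ x ∈ F, ∀ r R : ℝ, 0 < r → r < R →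
    coverNumber (F ∩ Metric.ball x R) r ≤ ENNReal.ofReal (C * (R / r) ^ s)}

/-- The orthogonal projection onto the line of angle `θ`, identified with `ℝ`. -/
def projDir (θ : ℝ) (p : ℝ × ℝ) : ℝ := p.1 * Real.cos θ + p.2 * Real.sin θ

/-! ### Upper bounds from lattice digit systems -/

/-- `iterDigits M A k` is the set of level-`k` digit sums `∑_{i<k} M^i a_i` with `a_i ∈ A`,
counted without multiplicity. -/
def iterDigits {E : Type*} [AddCommGroup E] [Module ℝ E] (M : ℕ) (A : Finset E) : ℕ → Finset E
  | 0 => {0}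
  | k + 1 => by
    classical exact Finset.image₂ (fun e a => (M : ℝ) • e + a) (iterDigits M A k) A

lemma card_iterDigits_le {E : Type*} [AddCommGroup E] [Module ℝ E] (M : ℕ) (A : Finset E)
    (k : ℕ) : (iterDigits M A k).card ≤ A.card ^ k := by
  classical
  induction k with
  | zero => simp [iterDigits]
  | succ k ih =>
    rw [iterDigits, pow_succ]
    exact (Finset.card_image₂_le _ _ _).trans (Nat.mul_le_mul_right _ ih)

lemma iterDigits_mem {E : Type*} [AddCommGroup E] [Module ℝ E] (M : ℕ) (A : Finset E)
    (G : AddSubgroup E) (hA : ∀ a ∈ A, a ∈ G) (k : ℕ) : ∀ e ∈ iterDigits M A k, e ∈ G := by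
  classical
  induction k with
  | zero => simp [iterDigits, G.zero_mem]
  | succ k ih =>
    intro e he
    rw [iterDigits] at he
    obtain ⟨e', he', a, ha, rfl⟩ := Finset.mem_image₂.1 he
    refine G.add_mem ?_ (hA a ha)
    rw [Nat.cast_smul_eq_nsmul]
    exact G.nsmul_mem (ih e' he') M

lemma exists_iterDigits {E : Type*} [AddCommGroup E] [Module ℝ E] {M : ℕ} {A : Finset E}
    {L : Set E} (hL : ∀ z ∈ L, ∃ a ∈ A, ∃ l ∈ L, (M : ℝ) • z = l + a) (k : ℕ) :
    ∀ z ∈ L, ∃ e ∈ iterDigits M A k, ∃ l ∈ L, ((M : ℝ) ^ k) • z = l + e := by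
  classical
  induction k with
  | zero => intro z hz; exact ⟨0, by simp [iterDigits], z, hz, by simp⟩
  | succ k ih =>
    intro z hz
    obtain ⟨e, he, l, hl, h⟩ := ih z hz
    obtain ⟨a, ha, l', hl', h'⟩ := hL l hl
    refine ⟨(M : ℝ) • e + a, ?_, l', hl', ?_⟩
    · rw [iterDigits]; exact Finset.mem_image₂.2 ⟨e, he, a, ha, rfl⟩
    · rw [pow_succ', mul_smul, h, smul_add, h']; abel

lemma coverNumber_le_card {X : Type*} [PseudoMetricSpace X] {A : Set X} {r : ℝ}
    (S : Finset (Set X)) (h : A ⊆ ⋃ s ∈ S, s)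
    (hd : ∀ s ∈ S, Metric.ediam s ≤ ENNReal.ofReal r) : coverNumber A r ≤ S.card :=
  iInf_le_of_le S (iInf_le_of_le h (iInf_le_of_le hd le_rfl))

lemma assouadDim_le {X : Type*} [PseudoMetricSpace X] {F : Set X} {s : ℝ} (hs : 0 ≤ s)
    (h : ∃ C : ℝ, 0 < C ∧ ∀ x ∈ F, ∀ r R : ℝ, 0 < r → r < R →
      coverNumber (F ∩ Metric.ball x R) r ≤ ENNReal.ofReal (C * (R / r) ^ s)) :
    assouadDim F ≤ s :=
  csInf_le ⟨0, fun _ h => h.1⟩ ⟨hs, h⟩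

/-- If `M • L ⊆ L + A` for a finite subset `A` of a discrete group, then `L` satisfies the
Assouad covering condition with exponent `log |A| / log M`: a ball of radius about `M^{-k}` meets
a bounded number of level-`k` cells, and each of those splits into `|A|^j` cells of level `k + j`. -/
lemma cover_of_digits {E : Type*} [NormedAddCommGroup E] [NormedSpace ℝ E] {M : ℕ} (hM : 2 ≤ M)
    {A : Finset E} (hA0 : A.Nonempty) {L : Set E} (hb : Bornology.IsBounded L)
    (hL : ∀ z ∈ L, ∃ a ∈ A, ∃ l ∈ L, (M : ℝ) • z = l + a)
    (G : AddSubgroup E) (hA : ∀ a ∈ A, a ∈ G)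
    (hG : ∀ ρ : ℝ, ((G : Set E) ∩ Metric.closedBall 0 ρ).Finite) :
    ∃ C : ℝ, 0 < C ∧ ∀ x ∈ L, ∀ r R : ℝ, 0 < r → r < R →
      coverNumber (L ∩ Metric.ball x R) r ≤
        ENNReal.ofReal (C * (R / r) ^ (Real.logb M A.card)) := by
  classical
  obtain ⟨D, hD0, hD⟩ : ∃ D : ℝ, 0 < D ∧ ∀ l ∈ L, ‖l‖ ≤ D := hb.exists_pos_norm_le
  set F : Finset E := (hG (2 * D + 1)).toFinset with hF
  have hF0 : 0 < F.card := Finset.card_pos.2 ⟨0, by simp [hF, G.zero_mem]; linarith⟩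
  set s : ℝ := Real.logb M A.card with hs
  have hM1 : (1 : ℝ) < M := by exact_mod_cast hM
  have hMpos : (0 : ℝ) < M := by linarith
  have hApos : (0 : ℝ) < A.card := by exact_mod_cast hA0.card_pos
  have hs0 : 0 ≤ s := Real.logb_nonneg hM1 (by exact_mod_cast hA0.card_pos)
  have hMs : (M : ℝ) ^ s = A.card := Real.rpow_logb hMpos hM1.ne' hApos
  set B : ℝ := M * (1 + 2 * D * M) with hB
  have hBpos : 0 < B := by positivity
  refine ⟨F.card * B ^ s, by positivity, fun x hx r R hr hrR => ?_⟩
  have hR : 0 < R := hr.trans hrR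
  -- `M^{-k}` is comparable to `R`, except that the top level `k = 0` serves all `R > 1`.
  obtain ⟨k, hk1, hk2⟩ : ∃ k : ℕ, 1 ≤ M * R * (M : ℝ) ^ k ∧ (k = 0 ∨ R * (M : ℝ) ^ k ≤ 1) := by
    rcases le_total R 1 with h | h
    · obtain ⟨k, h1, h2⟩ := exists_nat_pow_near ((one_le_div hR).2 h) hM1
      refine ⟨k, ?_, Or.inr ?_⟩
      · rw [div_lt_iff₀ hR, pow_succ] at h2; nlinarith
      · rw [le_div_iff₀ hR] at h1; linarith
    · exact ⟨0, by simp; nlinarith, Or.inl rfl⟩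
  have hMk : (0 : ℝ) < (M : ℝ) ^ k := by positivity
  -- `j` is the number of further subdivisions after which cells have diameter at most `r`.
  obtain ⟨j, hj1, hj2⟩ : ∃ j : ℕ, 2 * D / (r * (M : ℝ) ^ k) ≤ (M : ℝ) ^ j ∧
      (M : ℝ) ^ j ≤ B * (R / r) := by
    have hRr : 1 ≤ R / r := (one_le_div hr).2 hrR.le
    have hy : 2 * D / (r * (M : ℝ) ^ k) ≤ 2 * D * M * (R / r) := by
      rw [div_le_iff₀ (by positivity)]
      have : 2 * D * M * (R / r) * (r * (M : ℝ) ^ k) = 2 * D * (M * R * (M : ℝ) ^ k) := by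
        field_simp
      rw [this]; nlinarith
    have hpos : 0 ≤ 2 * D / (r * (M : ℝ) ^ k) := by positivity
    obtain ⟨j, h1, h2⟩ := exists_nat_pow_near
      (show (1 : ℝ) ≤ 1 + 2 * D / (r * (M : ℝ) ^ k) by linarith) hM1
    refine ⟨j + 1, by linarith, ?_⟩
    rw [pow_succ, hB]
    have : (M : ℝ) ^ j ≤ (1 + 2 * D * M) * (R / r) := by nlinarith
    nlinarith
  obtain ⟨e₀, he₀, l₀, hl₀, h₀⟩ := exists_iterDigits hL k x hx
  let cell : E × E → Set E := fun p =>
    {z | ∃ l ∈ L, ((M : ℝ) ^ (k + j)) • z = l + (p.2 + ((M : ℝ) ^ j) • (e₀ + p.1))}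
  have hcov : L ∩ Metric.ball x R ⊆
      ⋃ t ∈ (F ×ˢ iterDigits M A j).image cell, t := by
    rintro z ⟨hz, hzx⟩
    obtain ⟨e, he, l, hl, h⟩ := exists_iterDigits hL k z hz
    obtain ⟨f, hf, l', hl', h'⟩ := exists_iterDigits hL j l hl
    have hg : e - e₀ ∈ F := by
      simp only [hF, Set.Finite.mem_toFinset, Set.mem_inter_iff, SetLike.mem_coe,
        mem_closedBall_zero_iff]
      refine ⟨G.sub_mem (iterDigits_mem M A G hA k e he) (iterDigits_mem M A G hA k e₀ he₀), ?_⟩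
      rcases hk2 with rfl | hk2
      · simp only [iterDigits, Finset.mem_singleton] at he he₀
        rw [he, he₀]; simp; linarith
      · have heq : e - e₀ = ((M : ℝ) ^ k) • (z - x) - l + l₀ := by
          rw [smul_sub, h, h₀]; abel
        have hzx' : ‖z - x‖ < R := by rwa [← dist_eq_norm]
        have h1 : ‖((M : ℝ) ^ k) • (z - x)‖ ≤ 1 := by
          rw [norm_smul, Real.norm_of_nonneg hMk.le]; nlinarith
        rw [heq]
        have := norm_add_le (((M : ℝ) ^ k) • (z - x) - l) l₀
        have := norm_sub_le (((M : ℝ) ^ k) • (z - x)) l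
        linarith [hD l hl, hD l₀ hl₀]
    refine Set.mem_biUnion (Finset.mem_coe.2 (Finset.mem_image_of_mem cell
      (Finset.mk_mem_product hg hf))) ⟨l', hl', ?_⟩
    rw [add_comm k j, pow_add, mul_smul, h, smul_add, h']
    simp only [add_sub_cancel]
    abel
  have hdiam : ∀ t ∈ (F ×ˢ iterDigits M A j).image cell,
      Metric.ediam t ≤ ENNReal.ofReal r := by
    intro t ht
    obtain ⟨p, -, rfl⟩ := Finset.mem_image.1 ht
    refine Metric.ediam_le ?_
    rintro z ⟨l, hl, h⟩ w ⟨l', hl', h'⟩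
    rw [edist_dist]
    refine ENNReal.ofReal_le_ofReal ?_
    have heq : ((M : ℝ) ^ (k + j)) • (z - w) = l - l' := by rw [smul_sub, h, h']; abel
    have hn : (M : ℝ) ^ (k + j) * ‖z - w‖ ≤ 2 * D := by
      have := congrArg norm heq
      rw [norm_smul, Real.norm_of_nonneg (by positivity)] at this
      rw [this]
      have := norm_sub_le l l'
      linarith [hD l hl, hD l' hl']
    rw [div_le_iff₀ (by positivity)] at hj1
    rw [dist_eq_norm]
    have hpos : 0 < (M : ℝ) ^ (k + j) := by positivity
    refine le_of_mul_le_mul_left (hn.trans (hj1.trans (le_of_eq ?_))) hpos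
    ring
  refine (coverNumber_le_card _ hcov hdiam).trans ?_
  rw [← ENNReal.ofReal_natCast]
  refine ENNReal.ofReal_le_ofReal ?_
  have hc : (((F ×ˢ iterDigits M A j).image cell).card : ℝ) ≤ F.card * (A.card : ℝ) ^ j := by
    have h1 := Finset.card_image_le (s := F ×ˢ iterDigits M A j) (f := cell)
    rw [Finset.card_product] at h1
    exact_mod_cast h1.trans (Nat.mul_le_mul_left _ (card_iterDigits_le M A j))
  refine hc.trans ?_
  have hpow : (A.card : ℝ) ^ j ≤ B ^ s * (R / r) ^ s := by
    rw [← Real.mul_rpow hBpos.le (by positivity), ← hMs, ← Real.rpow_natCast, ← Real.rpow_mul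
      hMpos.le, mul_comm s, Real.rpow_mul hMpos.le, Real.rpow_natCast]
    exact Real.rpow_le_rpow (by positivity) hj2 hs0
  rw [mul_assoc]
  exact mul_le_mul_of_nonneg_left hpow (by positivity)

/-! ### Slopes of differences of digit expansions are dense -/

/-- The integers with at most `n` base-`4` digits, all of them `0` or `1`. -/
def binFour : ℕ → Finset ℤ
  | 0 => {0}
  | n + 1 => (binFour n).image (fun x => 4 * x) ∪ (binFour n).image (fun x => 4 * x + 1)

/-- The differences of two elements of `binFour n`, that is, the integers
`∑_{i<n} 4^i ε_i` with `ε_i ∈ {-1, 0, 1}`. -/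
def diffFour (n : ℕ) : Set ℤ := {P | ∃ x ∈ binFour n, ∃ y ∈ binFour n, P = x - y}

lemma mem_binFour_succ {n : ℕ} {z : ℤ} :
    z ∈ binFour (n + 1) ↔ ∃ x ∈ binFour n, z = 4 * x ∨ z = 4 * x + 1 := by
  simp only [binFour, Finset.mem_union, Finset.mem_image]
  grind

lemma card_binFour_le (n : ℕ) : (binFour n).card ≤ 2 ^ n := by
  induction n with
  | zero => simp [binFour]
  | succ n ih =>
    rw [binFour, pow_succ]
    refine (Finset.card_union_le _ _).trans ?_
    have h1 := Finset.card_image_le (s := binFour n) (f := fun x => 4 * x)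
    have h2 := Finset.card_image_le (s := binFour n) (f := fun x => 4 * x + 1)
    omega

lemma zero_mem_binFour (n : ℕ) : (0 : ℤ) ∈ binFour n := by
  induction n with
  | zero => simp [binFour]
  | succ n ih => exact mem_binFour_succ.2 ⟨0, ih, Or.inl rfl⟩

lemma binFour_subset_succ (n : ℕ) : ∀ x ∈ binFour n, x ∈ binFour (n + 1) := by
  induction n with
  | zero => simp [binFour]
  | succ n ih =>
    intro x hx
    obtain ⟨y, hy, h⟩ := mem_binFour_succ.1 hx
    exact mem_binFour_succ.2 ⟨y, ih y hy, h⟩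

lemma diffFour_digit {n : ℕ} {P : ℤ} (hP : P ∈ diffFour n) {i : ℤ}
    (hi : i = -1 ∨ i = 0 ∨ i = 1) : 4 * P + i ∈ diffFour (n + 1) := by
  obtain ⟨x, hx, y, hy, rfl⟩ := hP
  rcases hi with rfl | rfl | rfl
  · exact ⟨4 * x, mem_binFour_succ.2 ⟨x, hx, Or.inl rfl⟩, 4 * y + 1,
      mem_binFour_succ.2 ⟨y, hy, Or.inr rfl⟩, by ring⟩
  · exact ⟨4 * x, mem_binFour_succ.2 ⟨x, hx, Or.inl rfl⟩, 4 * y,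
      mem_binFour_succ.2 ⟨y, hy, Or.inl rfl⟩, by ring⟩
  · exact ⟨4 * x + 1, mem_binFour_succ.2 ⟨x, hx, Or.inr rfl⟩, 4 * y,
      mem_binFour_succ.2 ⟨y, hy, Or.inl rfl⟩, by ring⟩

lemma diffFour_mono {n : ℕ} {P : ℤ} (hP : P ∈ diffFour n) (m : ℕ) : P ∈ diffFour (n + m) := by
  induction m with
  | zero => exact hP
  | succ m ih =>
    obtain ⟨x, hx, y, hy, rfl⟩ := ih
    exact ⟨x, binFour_subset_succ _ x hx, y, binFour_subset_succ _ y hy, rfl⟩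

lemma diffFour_four_pow {n : ℕ} {P : ℤ} (hP : P ∈ diffFour n) (m : ℕ) :
    4 ^ m * P ∈ diffFour (n + m) := by
  induction m with
  | zero => simpa using hP
  | succ m ih =>
    have := diffFour_digit ih (i := 0) (by simp)
    rwa [show (4 : ℤ) * (4 ^ m * P) + 0 = 4 ^ (m + 1) * P by ring] at this

lemma diffFour_neg {n : ℕ} {P : ℤ} (hP : P ∈ diffFour n) : -P ∈ diffFour n := by
  obtain ⟨x, hx, y, hy, rfl⟩ := hP
  exact ⟨y, hy, x, hx, by ring⟩

lemma one_mem_diffFour : (1 : ℤ) ∈ diffFour 1 := ⟨1, by simp [binFour], 0, by simp [binFour], rfl⟩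

/-- Greedy choice of digits: if `u ∈ [1/2, 2]` and `|c| ≤ (1 + u) / 3`, then `4 c` can be brought
back to that range by adding one of `0`, `±u`, `±(1 + u)`, as consecutive values in this list
differ by at most `2 (1 + u) / 3`. -/
lemma greedy_digit {u c : ℝ} (h1 : 1 / 2 ≤ u) (h2 : u ≤ 2) (hc : |c| ≤ (1 + u) / 3) :
    ∃ i j : ℤ, (i = -1 ∨ i = 0 ∨ i = 1) ∧ (j = -1 ∨ j = 0 ∨ j = 1) ∧
      |4 * c + (i - u * j)| ≤ (1 + u) / 3 := by
  rw [abs_le] at hc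
  by_cases a1 : 4 * c < -u - (1 + u) / 3
  · exact ⟨1, -1, by simp, by simp, by push_cast; rw [abs_le]; constructor <;> linarith⟩
  by_cases a2 : 4 * c < -(1 + u) / 3
  · exact ⟨0, -1, by simp, by simp, by push_cast; rw [abs_le]; constructor <;> linarith⟩
  by_cases a3 : 4 * c ≤ (1 + u) / 3
  · exact ⟨0, 0, by simp, by simp, by push_cast; rw [abs_le]; constructor <;> linarith⟩
  by_cases a4 : 4 * c ≤ u + (1 + u) / 3
  · exact ⟨0, 1, by simp, by simp, by push_cast; rw [abs_le]; constructor <;> linarith⟩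
  · exact ⟨-1, 1, by simp, by simp, by push_cast; rw [abs_le]; constructor <;> linarith⟩

lemma greedy_approx {u : ℝ} (h1 : 1 / 2 ≤ u) (h2 : u ≤ 2) (n : ℕ) :
    ∃ P ∈ diffFour (n + 1), ∃ Q ∈ diffFour (n + 1),
      |(P : ℝ) - u * Q| ≤ (1 + u) / 3 ∧ 2 * 4 ^ n + 1 ≤ 3 * Q := by
  induction n with
  | zero =>
    refine ⟨1, one_mem_diffFour, 1, one_mem_diffFour, ?_, by norm_num⟩
    push_cast; rw [abs_le]; constructor <;> linarith
  | succ n ih =>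
    obtain ⟨P, hP, Q, hQ, hc, hlow⟩ := ih
    obtain ⟨i, j, hi, hj, h⟩ := greedy_digit h1 h2 hc
    refine ⟨4 * P + i, diffFour_digit hP hi, 4 * Q + j, diffFour_digit hQ hj, ?_, ?_⟩
    · push_cast
      convert h using 2
      ring
    · rw [pow_succ]; omega

lemma exists_ratio_near_mid {u ε : ℝ} (h1 : 1 / 2 ≤ u) (h2 : u ≤ 2) (hε : 0 < ε) :
    ∃ n, ∃ P ∈ diffFour n, ∃ Q ∈ diffFour n, Q ≠ 0 ∧ |(P : ℝ) / Q - u| < ε := by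
  obtain ⟨n, hn⟩ := pow_unbounded_of_one_lt (2 / ε) (show (1 : ℝ) < 4 by norm_num)
  obtain ⟨P, hP, Q, hQ, hc, hlow⟩ := greedy_approx h1 h2 n
  have hlow' : 2 * (4 : ℝ) ^ n + 1 ≤ 3 * Q := by exact_mod_cast hlow
  have h4 : (0 : ℝ) < 4 ^ n := by positivity
  have hQ0 : (0 : ℝ) < Q := by linarith
  refine ⟨n + 1, P, hP, Q, hQ, by exact_mod_cast hQ0.ne', ?_⟩
  have : (P : ℝ) / Q - u = (P - u * Q) / Q := by field_simp
  rw [this, abs_div, abs_of_pos hQ0, div_lt_iff₀ hQ0]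
  rw [div_lt_iff₀ hε] at hn
  nlinarith

/-- Multiplying numerator or denominator by a power of `4` moves the slope into `[1/2, 2)`. -/
lemma exists_ratio_near_pos {t ε : ℝ} (ht : 0 < t) (hε : 0 < ε) :
    ∃ n, ∃ P ∈ diffFour n, ∃ Q ∈ diffFour n, Q ≠ 0 ∧ |(P : ℝ) / Q - t| < ε := by
  obtain ⟨k, hk1, hk2⟩ := exists_mem_Ico_zpow (show 0 < 2 * t by linarith)
    (show (1 : ℝ) < 4 by norm_num)
  have h4 : (0 : ℝ) < 4 ^ k := by positivity
  rw [zpow_add_one₀ (by norm_num)] at hk2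
  obtain ⟨n, P, hP, Q, hQ, hQ0, h⟩ := exists_ratio_near_mid (u := t / 4 ^ k) (ε := ε / 4 ^ k)
    (by rw [le_div_iff₀ h4]; linarith) (by rw [div_le_iff₀ h4]; linarith) (by positivity)
  have key : |(4 : ℝ) ^ k * (P / Q) - t| < ε := by
    have : (4 : ℝ) ^ k * (P / Q) - t = 4 ^ k * (P / Q - t / 4 ^ k) := by field_simp
    rw [this, abs_mul, abs_of_pos h4, mul_comm]
    exact (lt_div_iff₀ h4).1 h
  obtain ⟨m, rfl | rfl⟩ := k.eq_nat_or_neg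
  · refine ⟨n + m, 4 ^ m * P, diffFour_four_pow hP m, Q, diffFour_mono hQ m, hQ0, ?_⟩
    convert key using 2
    push_cast [zpow_natCast]
    ring
  · refine ⟨n + m, P, diffFour_mono hP m, 4 ^ m * Q, diffFour_four_pow hQ m, by positivity, ?_⟩
    convert key using 2
    push_cast [zpow_natCast, zpow_neg]
    field_simp

lemma exists_ratio_near (t : ℝ) {ε : ℝ} (hε : 0 < ε) :
    ∃ n, ∃ P ∈ diffFour n, ∃ Q ∈ diffFour n, Q ≠ 0 ∧ |(P : ℝ) / Q - t| < ε := by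
  rcases lt_trichotomy t 0 with ht | rfl | ht
  · obtain ⟨n, P, hP, Q, hQ, hQ0, h⟩ := exists_ratio_near_pos (neg_pos.2 ht) hε
    refine ⟨n, -P, diffFour_neg hP, Q, hQ, hQ0, ?_⟩
    rw [← abs_neg]
    convert h using 2
    push_cast
    ring
  · exact ⟨1, 0, ⟨0, zero_mem_binFour 1, 0, zero_mem_binFour 1, rfl⟩, 1, one_mem_diffFour,
      one_ne_zero, by simpa using hε⟩
  · exact exists_ratio_near_pos ht hε

/-- The directions whose tangent is a ratio of two elements of some `diffFour n` are dense. -/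
lemma dense_overlap_angles :
    Dense {θ : ℝ | Real.cos θ ≠ 0 ∧ ∃ n, ∃ P ∈ diffFour n, ∃ Q ∈ diffFour n,
      Q ≠ 0 ∧ Real.tan θ = (P : ℝ) / Q} := by
  rw [dense_iff_inter_open]
  intro U hU hne
  obtain ⟨θ, hθU, hcos⟩ : ∃ θ ∈ U, Real.cos θ ≠ 0 := by
    obtain ⟨θ, hθ⟩ := hne
    by_cases hc : Real.cos θ = 0
    · obtain ⟨δ, hδ, hball⟩ := Metric.isOpen_iff.1 hU θ hθ
      have hm : 0 < min (δ / 2) 1 := by positivity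
      refine ⟨θ + min (δ / 2) 1, hball ?_, ?_⟩
      · rw [Metric.mem_ball, Real.dist_eq, add_sub_cancel_left, abs_of_pos hm]
        exact (min_le_left _ _).trans_lt (by linarith)
      · have hs : Real.sin θ ≠ 0 := by
          intro h; have := Real.sin_sq_add_cos_sq θ; rw [h, hc] at this; norm_num at this
        have hs' : 0 < Real.sin (min (δ / 2) 1) := Real.sin_pos_of_pos_of_lt_pi hm
          ((min_le_right _ _).trans_lt (by linarith [Real.pi_gt_three]))
        rw [Real.cos_add, hc]
        simp [hs, hs'.ne']
    · exact ⟨θ, hθ, hc⟩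
  -- `g` is the branch of the inverse tangent passing through `θ`.
  let g : ℝ → ℝ := fun x => Real.arctan x + (θ - Real.arctan (Real.tan θ))
  have hg : Continuous g := by fun_prop
  have hgU : g ⁻¹' U ∈ nhds (Real.tan θ) :=
    hg.continuousAt.preimage_mem_nhds (hU.mem_nhds (by simpa [g] using hθU))
  obtain ⟨ε, hε, hball⟩ := Metric.mem_nhds_iff.1 hgU
  obtain ⟨n, P, hP, Q, hQ, hQ0, h⟩ := exists_ratio_near (Real.tan θ) hε
  obtain ⟨k, hk⟩ : ∃ k : ℤ, k * Real.pi = θ - Real.arctan (Real.tan θ) := by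
    rw [← Real.sin_eq_zero_iff, Real.sin_sub]
    have h1 := Real.tan_arctan (Real.tan θ)
    have h2 := (Real.cos_arctan_pos (Real.tan θ)).ne'
    rw [Real.tan_eq_sin_div_cos, div_eq_iff h2, Real.tan_eq_sin_div_cos θ] at h1
    rw [← Real.tan_eq_sin_div_cos θ] at h1
    rw [h1, Real.tan_eq_sin_div_cos θ]
    field_simp
    ring
  have hgt : ∀ x, g x = Real.arctan x + k * Real.pi := fun x => by simp only [g, hk]
  refine ⟨g (P / Q), hball (by rwa [Metric.mem_ball, Real.dist_eq]), ?_, n, P, hP, Q, hQ, hQ0, ?_⟩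
  · rw [hgt, Real.cos_add_int_mul_pi]
    exact mul_ne_zero (zpow_ne_zero _ (by norm_num)) (Real.cos_arctan_pos _).ne'
  · rw [hgt, Real.tan_add_int_mul_pi, Real.tan_arctan]

/-! ### The four-corner Cantor set -/

/-- The self-similarity of `K`, read downwards and iterated `n` times. -/
lemma corner_iterate {K : Set (ℝ × ℝ)}
    (hK : K = ⋃ c ∈ ({(0, 0), (3, 0), (0, 3), (3, 3)} : Set (ℝ × ℝ)),
      (fun p : ℝ × ℝ => (p.1 / 4 + c.1 / 4, p.2 / 4 + c.2 / 4)) '' K) (n : ℕ) :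
    ∀ p ∈ K, ∃ x ∈ binFour n, ∃ y ∈ binFour n, ∃ q ∈ K,
      4 ^ n * p.1 = q.1 + 3 * x ∧ 4 ^ n * p.2 = q.2 + 3 * y := by
  induction n with
  | zero => exact fun p hp => ⟨0, zero_mem_binFour 0, 0, zero_mem_binFour 0, p, hp, by simp⟩
  | succ n ih =>
    intro p hp
    obtain ⟨x, hx, y, hy, q, hq, h1, h2⟩ := ih p hp
    rw [hK] at hq
    simp only [Set.mem_iUnion, Set.mem_image, exists_prop] at hq
    obtain ⟨c, hc, q', hq', rfl⟩ := hq
    simp only at h1 h2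
    simp only [Set.mem_insert_iff, Set.mem_singleton_iff] at hc
    have m0 : ∀ z ∈ binFour n, 4 * z ∈ binFour (n + 1) := fun z hz =>
      mem_binFour_succ.2 ⟨z, hz, Or.inl rfl⟩
    have m1 : ∀ z ∈ binFour n, 4 * z + 1 ∈ binFour (n + 1) := fun z hz =>
      mem_binFour_succ.2 ⟨z, hz, Or.inr rfl⟩
    rcases hc with rfl | rfl | rfl | rfl
    · exact ⟨_, m0 x hx, _, m0 y hy, q', hq', by push_cast; rw [pow_succ]; linarith,
        by push_cast; rw [pow_succ]; linarith⟩
    · exact ⟨_, m1 x hx, _, m0 y hy, q', hq', by push_cast; rw [pow_succ]; linarith,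
        by push_cast; rw [pow_succ]; linarith⟩
    · exact ⟨_, m0 x hx, _, m1 y hy, q', hq', by push_cast; rw [pow_succ]; linarith,
        by push_cast; rw [pow_succ]; linarith⟩
    · exact ⟨_, m1 x hx, _, m1 y hy, q', hq', by push_cast; rw [pow_succ]; linarith,
        by push_cast; rw [pow_succ]; linarith⟩

lemma corner_cover {K : Set (ℝ × ℝ)} (hKc : IsCompact K)
    (hK : K = ⋃ c ∈ ({(0, 0), (3, 0), (0, 3), (3, 3)} : Set (ℝ × ℝ)),
      (fun p : ℝ × ℝ => (p.1 / 4 + c.1 / 4, p.2 / 4 + c.2 / 4)) '' K) :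
    ∃ s : ℝ, 0 ≤ s ∧ s ≤ 1 ∧ ∃ C : ℝ, 0 < C ∧ ∀ x ∈ K, ∀ r R : ℝ, 0 < r → r < R →
      coverNumber (K ∩ Metric.ball x R) r ≤ ENNReal.ofReal (C * (R / r) ^ s) := by
  classical
  set A : Finset (ℝ × ℝ) := (binFour 1 ×ˢ binFour 1).image
    (fun p => (3 * (p.1 : ℝ), 3 * (p.2 : ℝ))) with hA
  have hA0 : A.Nonempty := ⟨_, Finset.mem_image_of_mem _
    (Finset.mk_mem_product (zero_mem_binFour 1) (zero_mem_binFour 1))⟩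
  have hcard : A.card ≤ 4 := by
    refine Finset.card_image_le.trans ?_
    rw [Finset.card_product]
    have := card_binFour_le 1
    nlinarith
  refine ⟨Real.logb (4 : ℕ) A.card, Real.logb_nonneg (by norm_num)
    (by exact_mod_cast hA0.card_pos), ?_, cover_of_digits (M := 4) (by norm_num) hA0
    hKc.isBounded ?_
    (AddMonoidHom.prodMap (Int.castAddHom ℝ) (Int.castAddHom ℝ)).range ?_ ?_⟩
  · rw [Real.logb_le_iff_le_rpow (by norm_num) (by exact_mod_cast hA0.card_pos), Real.rpow_one]
    exact_mod_cast hcard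
  · intro p hp
    obtain ⟨x, hx, y, hy, q, hq, h1, h2⟩ := corner_iterate hK 1 p hp
    refine ⟨_, Finset.mem_image_of_mem _ (Finset.mk_mem_product hx hy), q, hq, ?_⟩
    ext
    · simpa using h1
    · simpa using h2
  · intro a ha
    obtain ⟨p, -, rfl⟩ := Finset.mem_image.1 ha
    exact ⟨(3 * p.1, 3 * p.2), by simp⟩
  · intro ρ
    refine ((Set.finite_Icc (-⌈ρ⌉) ⌈ρ⌉).prod (Set.finite_Icc (-⌈ρ⌉) ⌈ρ⌉)).image
      (fun p : ℤ × ℤ => ((p.1 : ℝ), (p.2 : ℝ))) |>.subset ?_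
    rintro _ ⟨⟨⟨a, b⟩, rfl⟩, h⟩
    rw [mem_closedBall_zero_iff, Prod.norm_def, max_le_iff] at h
    simp only [AddMonoidHom.prodMap_def, AddMonoidHom.prod_apply, AddMonoidHom.comp_apply,
      AddMonoidHom.coe_fst, AddMonoidHom.coe_snd, Int.coe_castAddHom, Real.norm_eq_abs,
      abs_le] at h
    have hρ := Int.le_ceil ρ
    refine ⟨(a, b), ⟨⟨?_, ?_⟩, ⟨?_, ?_⟩⟩, by simp⟩
    all_goals
      rw [← Int.cast_le (R := ℝ)]
      push_cast
      linarith [h.1.1, h.1.2, h.2.1, h.2.2]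

/-- The map `(x, y) ↦ x + 2 y` sends `K` onto an interval: its digits `0, 3, 6, 9` are three times
a complete set of base-`4` digits. -/
lemma Icc_subset_image_corner {K : Set (ℝ × ℝ)} (hKne : K.Nonempty) (hKc : IsCompact K)
    (hK : K = ⋃ c ∈ ({(0, 0), (3, 0), (0, 3), (3, 3)} : Set (ℝ × ℝ)),
      (fun p : ℝ × ℝ => (p.1 / 4 + c.1 / 4, p.2 / 4 + c.2 / 4)) '' K) :
    Set.Icc (0 : ℝ) 3 ⊆ (fun p : ℝ × ℝ => p.1 + 2 * p.2) '' K := by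
  have hstep : ∀ c ∈ ({(0, 0), (3, 0), (0, 3), (3, 3)} : Set (ℝ × ℝ)), ∀ p ∈ K,
      (p.1 / 4 + c.1 / 4, p.2 / 4 + c.2 / 4) ∈ K := by
    intro c hc p hp
    rw [hK]
    exact Set.mem_biUnion hc ⟨p, hp, rfl⟩
  obtain ⟨p₀, hp₀⟩ := hKne
  -- Every point of `[0, 3]` is within `B / 4^n` of the image, for every `n`.
  set B : ℝ := 3 + |p₀.1 + 2 * p₀.2| with hB
  have happ : ∀ n : ℕ, ∀ t ∈ Set.Icc (0 : ℝ) 3, ∃ p ∈ K, |t - (p.1 + 2 * p.2)| ≤ B / 4 ^ n := by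
    intro n
    induction n with
    | zero =>
      rintro t ⟨h0, h3⟩
      refine ⟨p₀, hp₀, ?_⟩
      have := abs_sub t (p₀.1 + 2 * p₀.2)
      rw [abs_of_nonneg h0] at this
      simp only [pow_zero, div_one]
      linarith
    | succ n ih =>
      rintro t ⟨h0, h3⟩
      obtain ⟨c, hc, ht⟩ : ∃ c ∈ ({(0, 0), (3, 0), (0, 3), (3, 3)} : Set (ℝ × ℝ)),
          4 * t - (c.1 + 2 * c.2) ∈ Set.Icc (0 : ℝ) 3 := by
        by_cases a1 : 4 * t ≤ 3
        · exact ⟨(0, 0), by simp, by constructor <;> simp <;> linarith⟩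
        by_cases a2 : 4 * t ≤ 6
        · exact ⟨(3, 0), by simp, by constructor <;> simp <;> linarith⟩
        by_cases a3 : 4 * t ≤ 9
        · exact ⟨(0, 3), by simp, by constructor <;> simp <;> linarith⟩
        · exact ⟨(3, 3), by simp, by constructor <;> simp <;> linarith⟩
      obtain ⟨p, hp, h⟩ := ih _ ht
      refine ⟨_, hstep c hc p hp, ?_⟩
      have heq : t - (p.1 / 4 + c.1 / 4 + 2 * (p.2 / 4 + c.2 / 4)) =
          (4 * t - (c.1 + 2 * c.2) - (p.1 + 2 * p.2)) / 4 := by ring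
      simp only
      rw [heq, abs_div, abs_of_pos (show (0 : ℝ) < 4 by norm_num), pow_succ, ← div_div]
      gcongr
  have hclosed : IsClosed ((fun p : ℝ × ℝ => p.1 + 2 * p.2) '' K) :=
    (hKc.image (by fun_prop)).isClosed
  intro t ht
  rw [← hclosed.closure_eq, Metric.mem_closure_iff]
  intro ε hε
  obtain ⟨n, hn⟩ := pow_unbounded_of_one_lt (B / ε) (show (1 : ℝ) < 4 by norm_num)
  obtain ⟨p, hp, h⟩ := happ n t ht
  refine ⟨_, ⟨p, hp, rfl⟩, ?_⟩
  rw [Real.dist_eq]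
  refine h.trans_lt ?_
  rw [div_lt_iff₀ (by positivity)]
  rw [div_lt_iff₀ hε] at hn
  linarith

lemma one_div_le_coverNumber_corner {K : Set (ℝ × ℝ)} (hKne : K.Nonempty) (hKc : IsCompact K)
    (hK : K = ⋃ c ∈ ({(0, 0), (3, 0), (0, 3), (3, 3)} : Set (ℝ × ℝ)),
      (fun p : ℝ × ℝ => (p.1 / 4 + c.1 / 4, p.2 / 4 + c.2 / 4)) '' K) {r : ℝ} (hr : 0 < r) :
    ENNReal.ofReal (1 / r) ≤ coverNumber K r := by
  have hlip : LipschitzWith 3 (fun p : ℝ × ℝ => p.1 + 2 * p.2) := by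
    refine LipschitzWith.of_dist_le_mul fun p q => ?_
    rw [Real.dist_eq, dist_eq_norm, Prod.norm_def]
    have h1 : |p.1 - q.1| ≤ max ‖(p - q).1‖ ‖(p - q).2‖ := le_max_left _ _
    have h2 : |p.2 - q.2| ≤ max ‖(p - q).1‖ ‖(p - q).2‖ := le_max_right _ _
    have h3 : p.1 + 2 * p.2 - (q.1 + 2 * q.2) = (p.1 - q.1) + 2 * (p.2 - q.2) := by ring
    rw [h3]
    have h4 := abs_add_le (p.1 - q.1) (2 * (p.2 - q.2))
    rw [abs_mul, abs_two] at h4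
    push_cast
    linarith
  refine le_iInf fun S => le_iInf fun hS => le_iInf fun hd => ?_
  have hsub : Set.Icc (0 : ℝ) 3 ⊆ ⋃ s ∈ S, (fun p : ℝ × ℝ => p.1 + 2 * p.2) '' s := by
    refine (Icc_subset_image_corner hKne hKc hK).trans ?_
    refine (Set.image_mono hS).trans ?_
    simp only [Set.image_iUnion]
    exact subset_rfl
  have hvol : ENNReal.ofReal 3 ≤ ENNReal.ofReal (S.card * (3 * r)) := by
    calc ENNReal.ofReal 3 = MeasureTheory.volume (Set.Icc (0 : ℝ) 3) := by simp
      _ ≤ ∑ s ∈ S, MeasureTheory.volume ((fun p : ℝ × ℝ => p.1 + 2 * p.2) '' s) :=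
          (MeasureTheory.measure_mono hsub).trans (MeasureTheory.measure_biUnion_finset_le _ _)
      _ ≤ ∑ s ∈ S, ENNReal.ofReal (3 * r) := by
          refine Finset.sum_le_sum fun s hs => ?_
          refine (Real.volume_le_diam _).trans ((hlip.ediam_image_le s).trans ?_)
          rw [ENNReal.ofReal_mul (by norm_num)]
          refine mul_le_mul' (by simp) (hd s hs)
      _ = ENNReal.ofReal (S.card * (3 * r)) := by
          rw [Finset.sum_const, nsmul_eq_mul,
            ENNReal.ofReal_mul (p := (S.card : ℝ)) (Nat.cast_nonneg _),
            ENNReal.ofReal_natCast]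
  have hnn : (0 : ℝ) ≤ S.card * (3 * r) := mul_nonneg (Nat.cast_nonneg _) (by linarith)
  rw [ENNReal.ofReal_le_ofReal_iff hnn] at hvol
  rw [← ENNReal.ofReal_natCast]
  refine ENNReal.ofReal_le_ofReal ?_
  rw [div_le_iff₀ hr]
  linarith

lemma assouadDim_corner {K : Set (ℝ × ℝ)} (hKne : K.Nonempty) (hKc : IsCompact K)
    (hK : K = ⋃ c ∈ ({(0, 0), (3, 0), (0, 3), (3, 3)} : Set (ℝ × ℝ)),
      (fun p : ℝ × ℝ => (p.1 / 4 + c.1 / 4, p.2 / 4 + c.2 / 4)) '' K) :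
    assouadDim K = 1 := by
  obtain ⟨s₀, hs0, hs1, hcov⟩ := corner_cover hKc hK
  refine le_antisymm ((assouadDim_le hs0 hcov).trans hs1) (le_csInf ⟨s₀, hs0, hcov⟩ ?_)
  rintro s ⟨-, C, hC, h⟩
  by_contra! hs
  obtain ⟨x, hx⟩ := hKne
  obtain ⟨R, hR, hKR⟩ := hKc.isBounded.subset_ball_lt 0 x
  -- Comparing both bounds on the covering number at scale `r = R / u` bounds `u ^ (1 - s)`.
  have hbound : ∀ u : ℝ, 1 < u → u ^ (1 - s) ≤ C * R := by
    intro u hu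
    have hu0 : 0 < u := by linarith
    have h1 := h x hx (R / u) R (by positivity) (div_lt_self hR hu)
    rw [Set.inter_eq_self_of_subset_left hKR] at h1
    have h2 := (one_div_le_coverNumber_corner ⟨x, hx⟩ hKc hK
      (show 0 < R / u by positivity)).trans h1
    rw [ENNReal.ofReal_le_ofReal_iff (by positivity)] at h2
    have e1 : R / (R / u) = u := by field_simp
    have e2 : 1 / (R / u) = u / R := by field_simp
    rw [e1, e2, div_le_iff₀ hR] at h2
    rw [Real.rpow_sub hu0, Real.rpow_one, div_le_iff₀ (by positivity)]
    linarith
  have ht := tendsto_rpow_atTop (show 0 < 1 - s by linarith)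
  obtain ⟨u, hu, hu1⟩ := ((ht.eventually_gt_atTop (C * R)).and
    (Filter.eventually_gt_atTop 1)).exists
  exact absurd (hbound u hu1) (not_le.2 hu)

/-- If `tan θ = P / Q` with `P = x₁ - x₂` and `Q = y₁ - y₂`, then the level-`n` cells of `K` at
`(x₁, y₂)` and `(x₂, y₁)` have the same projection. So the projection has fewer than `4^n` level-`n`
translations, and all of them lie in the discrete group generated by `cos θ / Q`. -/
lemma assouadDim_proj_lt {K : Set (ℝ × ℝ)} (hKc : IsCompact K)
    (hK : K = ⋃ c ∈ ({(0, 0), (3, 0), (0, 3), (3, 3)} : Set (ℝ × ℝ)),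
      (fun p : ℝ × ℝ => (p.1 / 4 + c.1 / 4, p.2 / 4 + c.2 / 4)) '' K) {θ : ℝ}
    (hcos : Real.cos θ ≠ 0) {n : ℕ} {P Q : ℤ} (hP : P ∈ diffFour n) (hQ : Q ∈ diffFour n)
    (hQ0 : Q ≠ 0) (htan : Real.tan θ = (P : ℝ) / Q) : assouadDim (projDir θ '' K) < 1 := by
  classical
  have hQR : (Q : ℝ) ≠ 0 := by exact_mod_cast hQ0
  have hsin : Real.sin θ = P * (Real.cos θ / Q) := by
    rw [Real.tan_eq_sin_div_cos, div_eq_iff hcos] at htan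
    rw [htan]; ring
  have hcosQ : Real.cos θ = Q * (Real.cos θ / Q) := by field_simp
  set f : ℤ × ℤ → ℝ := fun p => 3 * (p.1 * Real.cos θ + p.2 * Real.sin θ) with hf
  set A : Finset ℝ := (binFour n ×ˢ binFour n).image f with hA
  have hn : n ≠ 0 := by
    rintro rfl
    obtain ⟨x, hx, y, hy, rfl⟩ := hQ
    simp only [binFour, Finset.mem_singleton] at hx hy
    simp [hx, hy] at hQ0
  have hA0 : A.Nonempty := ⟨_, Finset.mem_image_of_mem _
    (Finset.mk_mem_product (zero_mem_binFour n) (zero_mem_binFour n))⟩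
  have hcard : A.card < 4 ^ n := by
    have h4 : (binFour n ×ˢ binFour n).card ≤ 4 ^ n := by
      rw [Finset.card_product, show (4 : ℕ) = 2 * 2 by norm_num, mul_pow]
      exact Nat.mul_le_mul (card_binFour_le n) (card_binFour_le n)
    refine lt_of_lt_of_le (lt_of_le_of_ne Finset.card_image_le ?_) h4
    rw [Ne, Finset.card_image_iff]
    intro hinj
    obtain ⟨x₁, hx₁, x₂, hx₂, hPx⟩ := hP
    obtain ⟨y₁, hy₁, y₂, hy₂, hQy⟩ := hQ
    have hcoin : f (x₁, y₂) = f (x₂, y₁) := by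
      have e1 : (P : ℝ) = x₁ - x₂ := by exact_mod_cast hPx
      have e2 : (Q : ℝ) = y₁ - y₂ := by exact_mod_cast hQy
      have e3 : (P : ℝ) * Real.cos θ = Q * Real.sin θ := by rw [hsin]; field_simp
      rw [e1, e2] at e3
      simp only [hf]
      linarith
    have := hinj (Finset.mem_coe.2 (Finset.mk_mem_product hx₁ hy₂))
      (Finset.mem_coe.2 (Finset.mk_mem_product hx₂ hy₁)) hcoin
    have := (Prod.ext_iff.1 this).2
    simp only at this
    exact hQ0 (by rw [hQy, this, sub_self])
  have hM : 2 ≤ 4 ^ n := (by norm_num : 2 ≤ 4).trans (Nat.le_self_pow hn 4)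
  have hM1 : (1 : ℝ) < ((4 ^ n : ℕ) : ℝ) := by exact_mod_cast hM
  have hbdd : Bornology.IsBounded (projDir θ '' K) :=
    (hKc.image (by unfold projDir; fun_prop)).isBounded
  have hcov := cover_of_digits hM hA0 hbdd ?_ (AddSubgroup.zmultiples (Real.cos θ / Q)) ?_ ?_
  · refine (assouadDim_le (Real.logb_nonneg hM1 (by exact_mod_cast hA0.card_pos)) hcov).trans_lt ?_
    rw [Real.logb_lt_iff_lt_rpow hM1 (by exact_mod_cast hA0.card_pos), Real.rpow_one]
    exact_mod_cast hcard
  · rintro _ ⟨p, hp, rfl⟩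
    obtain ⟨x, hx, y, hy, q, hq, h1, h2⟩ := corner_iterate hK n p hp
    refine ⟨_, Finset.mem_image_of_mem f (Finset.mk_mem_product hx hy), _, ⟨q, hq, rfl⟩, ?_⟩
    simp only [projDir, hf, smul_eq_mul]
    push_cast
    linear_combination Real.cos θ * h1 + Real.sin θ * h2
  · intro a ha
    obtain ⟨p, -, rfl⟩ := Finset.mem_image.1 ha
    refine AddSubgroup.mem_zmultiples_iff.2 ⟨3 * (p.1 * Q + p.2 * P), ?_⟩
    simp only [hf, zsmul_eq_mul]
    rw [hsin]
    push_cast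
    linear_combination (-3 * p.1 : ℝ) * hcosQ
  · intro ρ
    set g : ℝ := Real.cos θ / Q with hg
    have hg0 : 0 < |g| := abs_pos.2 (div_ne_zero hcos hQR)
    refine ((Set.finite_Icc (-⌈ρ / |g|⌉) ⌈ρ / |g|⌉).image (fun k : ℤ => k • g)).subset ?_
    rintro _ ⟨⟨k, rfl⟩, h⟩
    simp only [mem_closedBall_zero_iff, zsmul_eq_mul, norm_mul, Real.norm_eq_abs] at h
    rw [← le_div_iff₀ hg0, abs_le] at h
    have hρ := Int.le_ceil (ρ / |g|)
    refine ⟨k, ⟨?_, ?_⟩, rfl⟩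
    all_goals
      rw [← Int.cast_le (R := ℝ)]
      push_cast
      linarith [h.1, h.2]

/-- the quarter four-corner Cantor set `K` has Assouad dimension `1`, and the
set of directions in which the Assouad dimension of the projection drops below
`min(1, dim_A K)` is dense. -/
theorem stmt19 (K : Set (ℝ × ℝ)) (hKne : K.Nonempty) (hKc : IsCompact K)
    (hK : K = ⋃ c ∈ ({(0, 0), (3, 0), (0, 3), (3, 3)} : Set (ℝ × ℝ)),
      (fun p : ℝ × ℝ => (p.1 / 4 + c.1 / 4, p.2 / 4 + c.2 / 4)) '' K) :
    assouadDim K = 1 ∧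
      Dense {θ : ℝ | assouadDim (projDir θ '' K) < min 1 (assouadDim K)} := by
  have h1 := assouadDim_corner hKne hKc hK
  refine ⟨h1, dense_overlap_angles.mono ?_⟩
  rintro θ ⟨hcos, n, P, hP, Q, hQ, hQ0, htan⟩
  rw [Set.mem_ofPred_eq, h1, min_self]
  exact assouadDim_proj_lt hKc hK hcos hP hQ hQ0 htan

end
end
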